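/- For every maximal cap S in AG(4,3), the number of maximal caps in AG(4,3) that are disjoint from S is exactly 198. -/

import Mathlib

/-- A cap in `AG(n,3)`: a finite set of points of `Fin n → ZMod 3` containing no
three distinct collinear points (three distinct points are collinear iff they sum to zero). -/
def IsCap {n : ℕ} (C : Finset (Fin n → ZMod 3)) : Prop :=
  ∀ x ∈ C, ∀ y ∈ C, ∀ z ∈ C, x ≠ y → x ≠ z → y ≠ z → x + y + z ≠ 0

/-- A maximal cap: a cap of largest possible size. -/
def MaximalCap {n : ℕ} (C : Finset (Fin n → ZMod 3)) : Prop :=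
  IsCap C ∧ ∀ D : Finset (Fin n → ZMod 3), IsCap D → D.card ≤ C.card

namespace CapAux

open Finset

/-- Line preserving bijections of `AG(n,3)` (these are exactly the affine bijections). -/
def LP {n : ℕ} (e : (Fin n → ZMod 3) ≃ (Fin n → ZMod 3)) : Prop :=
  ∀ x y z, x + y + z = 0 ↔ e x + e y + e z = 0

theorem LP.symm {n : ℕ} {e : (Fin n → ZMod 3) ≃ (Fin n → ZMod 3)} (h : LP e) : LP e.symm := by
  intro x y z
  rw [h (e.symm x) (e.symm y) (e.symm z)]; simp

theorem LP.trans {n : ℕ} {e f : (Fin n → ZMod 3) ≃ (Fin n → ZMod 3)} (h : LP e) (h' : LP f) :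
    LP (e.trans f) := by
  intro x y z
  rw [h, h']; rfl

/-- Image of a finite set under a bijection. -/
def img {n : ℕ} (e : (Fin n → ZMod 3) ≃ (Fin n → ZMod 3)) (C : Finset (Fin n → ZMod 3)) :
    Finset (Fin n → ZMod 3) := C.map e.toEmbedding

theorem mem_img {n : ℕ} {e : (Fin n → ZMod 3) ≃ (Fin n → ZMod 3)} {C : Finset (Fin n → ZMod 3)}
    {x : Fin n → ZMod 3} : x ∈ img e C ↔ e.symm x ∈ C := by
  simp [img, Finset.mem_map_equiv]

theorem apply_mem_img {n : ℕ} {e : (Fin n → ZMod 3) ≃ (Fin n → ZMod 3)}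
    {C : Finset (Fin n → ZMod 3)} {x : Fin n → ZMod 3} : e x ∈ img e C ↔ x ∈ C := by
  simp [mem_img]

@[simp] theorem card_img {n : ℕ} (e : (Fin n → ZMod 3) ≃ (Fin n → ZMod 3))
    (C : Finset (Fin n → ZMod 3)) : (img e C).card = C.card := by
  simp [img]

theorem img_trans {n : ℕ} (e f : (Fin n → ZMod 3) ≃ (Fin n → ZMod 3))
    (C : Finset (Fin n → ZMod 3)) : img (e.trans f) C = img f (img e C) := by
  ext x; simp [mem_img]

theorem img_symm_img {n : ℕ} (e : (Fin n → ZMod 3) ≃ (Fin n → ZMod 3))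
    (C : Finset (Fin n → ZMod 3)) : img e.symm (img e C) = C := by
  ext x; simp [mem_img]

theorem img_img_symm {n : ℕ} (e : (Fin n → ZMod 3) ≃ (Fin n → ZMod 3))
    (C : Finset (Fin n → ZMod 3)) : img e (img e.symm C) = C := by
  ext x; simp [mem_img]

theorem LP.isCap {n : ℕ} {e : (Fin n → ZMod 3) ≃ (Fin n → ZMod 3)} (h : LP e)
    {C : Finset (Fin n → ZMod 3)} (hC : IsCap C) : IsCap (img e C) := by
  intro x hx y hy z hz hxy hxz hyz
  rw [Ne, h.symm]
  exact hC _ (mem_img.1 hx) _ (mem_img.1 hy) _ (mem_img.1 hz) (by simpa using hxy)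
    (by simpa using hxz) (by simpa using hyz)

theorem IsCap.mono {n : ℕ} {C D : Finset (Fin n → ZMod 3)} (hD : IsCap D) (h : C ⊆ D) :
    IsCap C := fun x hx y hy z hz => hD x (h hx) y (h hy) z (h hz)

/-- The standard way of building line preserving maps. -/
theorem exists_LP {n : ℕ} (g : (Fin n → ZMod 3) → (Fin n → ZMod 3)) (c : Fin n → ZMod 3)
    (hadd : ∀ x y, g (x + y) = g x + g y) (hinj : ∀ x, g x = 0 → x = 0) :
    ∃ e : (Fin n → ZMod 3) ≃ (Fin n → ZMod 3), LP e ∧ ∀ x, e x = g x + c := by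
  have h0 : g 0 = 0 := by simpa using hadd 0 0
  have hneg : ∀ x, g (-x) = - g x := fun x => by
    have := hadd x (-x)
    rw [add_neg_cancel, h0] at this
    exact (neg_eq_of_add_eq_zero_right this.symm).symm
  have hi : Function.Injective (fun x => g x + c) := by
    intro x y hxy
    have h1 : g x = g y := by simpa using hxy
    have h2 : g (x + -y) = 0 := by rw [hadd, hneg, h1]; simp
    have := hinj _ h2
    exact add_neg_eq_zero.1 this
  refine ⟨Equiv.ofBijective _ (Finite.injective_iff_bijective.1 hi), ?_, fun x => rfl⟩
  intro x y z
  have h3 : ∀ c : ZMod 3, c + c + c = 0 := by decide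
  have h3' : c + c + c = 0 := by ext i; exact h3 (c i)
  have : g x + c + (g y + c) + (g z + c) = g (x + y + z) := by
    rw [hadd, hadd]
    calc _ = g x + g y + g z + (c + c + c) := by abel
      _ = _ := by rw [h3', add_zero]
  simp only [Equiv.ofBijective_apply]
  rw [this]
  exact ⟨fun h => by rw [h, h0], hinj _⟩

theorem LP.affine {n : ℕ} {e : (Fin n → ZMod 3) ≃ (Fin n → ZMod 3)} (h : LP e)
    (x y : Fin n → ZMod 3) : e (x + y) + e 0 = e x + e y := by
  have h1 := (h (x + y) 0 (-(x + y))).1 (by abel)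
  have h2 := (h x y (-(x + y))).1 (by abel)
  exact add_right_cancel (h1.trans h2.symm)

/-! ### Slices -/

/-- The slice of `C` at first coordinate `t`. -/
def slice {n : ℕ} (C : Finset (Fin (n + 1) → ZMod 3)) (t : ZMod 3) : Finset (Fin n → ZMod 3) :=
  univ.filter fun x => (Fin.cons t x : Fin (n + 1) → ZMod 3) ∈ C

theorem mem_slice {n : ℕ} {C : Finset (Fin (n + 1) → ZMod 3)} {t : ZMod 3}
    {x : Fin n → ZMod 3} : x ∈ slice C t ↔ (Fin.cons t x : Fin (n + 1) → ZMod 3) ∈ C := by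
  simp [slice]

theorem tail_mem_slice {n : ℕ} {C : Finset (Fin (n + 1) → ZMod 3)}
    {x : Fin (n + 1) → ZMod 3} : Fin.tail x ∈ slice C (x 0) ↔ x ∈ C := by
  rw [mem_slice, Fin.cons_self_tail]

theorem cons_sum {n : ℕ} (a b c : ZMod 3) (x y z : Fin n → ZMod 3) :
    (Fin.cons a x : Fin (n + 1) → ZMod 3) + Fin.cons b y + Fin.cons c z = 0 ↔
      a + b + c = 0 ∧ x + y + z = 0 := by
  constructor
  · intro h
    refine ⟨by simpa using congrFun h 0, ?_⟩
    ext i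
    simpa using congrFun h i.succ
  · rintro ⟨h1, h2⟩
    ext i
    refine Fin.cases ?_ (fun i => ?_) i
    · simpa using h1
    · simpa using congrFun h2 i

theorem IsCap.slice {n : ℕ} {C : Finset (Fin (n + 1) → ZMod 3)} (hC : IsCap C) (t : ZMod 3) :
    IsCap (slice C t) := by
  intro x hx y hy z hz hxy hxz hyz h
  have h3 : ∀ c : ZMod 3, c + c + c = 0 := by decide
  exact hC _ (mem_slice.1 hx) _ (mem_slice.1 hy) _ (mem_slice.1 hz) (by simpa using hxy)
    (by simpa using hxz) (by simpa using hyz) ((cons_sum _ _ _ _ _ _).2 ⟨h3 t, h⟩)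

/-- Points in three different parallel slices. -/
theorem IsCap.slices {n : ℕ} {C : Finset (Fin (n + 1) → ZMod 3)} (hC : IsCap C)
    {x y z : Fin n → ZMod 3} (hx : x ∈ CapAux.slice C 0) (hy : y ∈ CapAux.slice C 1)
    (hz : z ∈ CapAux.slice C 2) : x + y + z ≠ 0 := by
  intro h
  refine hC _ (mem_slice.1 hx) _ (mem_slice.1 hy) _ (mem_slice.1 hz) ?_ ?_ ?_
    ((cons_sum _ _ _ _ _ _).2 ⟨by decide, h⟩)
  all_goals
    intro h'
    have := congrFun h' 0
    simp only [Fin.cons_zero] at this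
    revert this
    decide

theorem card_slice {n : ℕ} (C : Finset (Fin (n + 1) → ZMod 3)) (t : ZMod 3) :
    (slice C t).card = (C.filter fun x => x 0 = t).card := by
  apply Finset.card_bij (fun x _ => (Fin.cons t x : Fin (n + 1) → ZMod 3))
  · intro x hx
    simpa using mem_slice.1 hx
  · intro x _ y _ h
    simpa using h
  · intro x hx
    rw [mem_filter] at hx
    refine ⟨Fin.tail x, ?_, ?_⟩
    · rw [← hx.2]; exact tail_mem_slice.2 hx.1
    · rw [← hx.2]; exact Fin.cons_self_tail x

/-- Lift of a map to one dimension higher. -/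
theorem exists_lift {n : ℕ} {e : (Fin n → ZMod 3) ≃ (Fin n → ZMod 3)} (h : LP e) :
    ∃ E : (Fin (n + 1) → ZMod 3) ≃ (Fin (n + 1) → ZMod 3), LP E ∧
      ∀ C t, slice (img E C) t = img e (slice C t) := by
  let E : (Fin (n + 1) → ZMod 3) ≃ (Fin (n + 1) → ZMod 3) :=
    { toFun := fun x => Fin.cons (x 0) (e (Fin.tail x))
      invFun := fun x => Fin.cons (x 0) (e.symm (Fin.tail x))
      left_inv := fun x => by simp
      right_inv := fun x => by simp }
  refine ⟨E, ?_, ?_⟩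
  · intro x y z
    change _ ↔ (Fin.cons (x 0) (e (Fin.tail x)) : Fin (n + 1) → ZMod 3)
      + Fin.cons (y 0) (e (Fin.tail y)) + Fin.cons (z 0) (e (Fin.tail z)) = 0
    rw [cons_sum, ← h, ← cons_sum]
    simp
  · intro C t
    ext x
    rw [mem_slice, mem_img, mem_img, mem_slice]
    change (Fin.cons ((Fin.cons t x : Fin (n + 1) → ZMod 3) 0) _ : Fin (n + 1) → ZMod 3) ∈ C ↔ _
    simp

/-- Shears. -/
theorem exists_shear {n : ℕ} (w : Fin n → ZMod 3) (c : ZMod 3) :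
    ∃ E : (Fin (n + 1) → ZMod 3) ≃ (Fin (n + 1) → ZMod 3), LP E ∧
      ∀ C t x, x + (t + c) • w ∈ slice (img E C) t ↔ x ∈ slice C t := by
  obtain ⟨E, hE, hE'⟩ := exists_LP (n := n + 1)
    (fun x => Fin.cons (x 0) (Fin.tail x + (x 0) • w)) (Fin.cons 0 (c • w)) (by
      intro x y
      ext i
      refine Fin.cases ?_ (fun i => ?_) i
      · simp
      · simp [Fin.tail]; ring) (by
      intro x hx
      have h0 : x 0 = 0 := by simpa using congrFun hx 0
      ext i
      refine Fin.cases ?_ (fun i => ?_) i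
      · simpa using h0
      · simpa [Fin.tail, h0] using congrFun hx i.succ)
  refine ⟨E, hE, fun C t x => ?_⟩
  rw [mem_slice, mem_slice]
  have : (Fin.cons t (x + (t + c) • w) : Fin (n + 1) → ZMod 3)
    = Fin.cons ((Fin.cons t x : Fin (n + 1) → ZMod 3) 0)
      (Fin.tail (Fin.cons t x : Fin (n + 1) → ZMod 3)
        + ((Fin.cons t x : Fin (n + 1) → ZMod 3) 0) • w) + Fin.cons 0 (c • w) := by
    ext i
    refine Fin.cases ?_ (fun i => ?_) i
    · simp
    · simp; ring
  rw [this, ← hE', apply_mem_img]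

/-- Any nonzero functional can be made the first coordinate, with a prescribed shift. -/
theorem exists_coord {n : ℕ} (f : Fin (n + 1) → ZMod 3) (hf : f ≠ 0) (c : ZMod 3) :
    ∃ E : (Fin (n + 1) → ZMod 3) ≃ (Fin (n + 1) → ZMod 3), LP E ∧
      ∀ x, E x 0 = f ⬝ᵥ x + c := by
  obtain ⟨i, hi⟩ : ∃ i, f i ≠ 0 := by
    by_contra h
    push Not at h
    exact hf (funext h)
  obtain ⟨E, hE, hE'⟩ := exists_LP (n := n + 1)
    (fun x => Fin.cons (f ⬝ᵥ x) (i.removeNth x)) (Fin.cons c 0) (by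
      intro x y
      ext j
      refine Fin.cases ?_ (fun j => ?_) j
      · simp [dotProduct_add]
      · simp [Fin.removeNth]) (by
      intro x hx
      have h0 : f ⬝ᵥ x = 0 := by simpa using congrFun hx 0
      have h1 : ∀ j, x (i.succAbove j) = 0 := fun j => by
        simpa [Fin.removeNth] using congrFun hx j.succ
      have h2 : f i * x i = 0 := by
        rw [dotProduct, Fin.sum_univ_succAbove _ i] at h0
        simpa [h1] using h0
      have h3 : ∀ a b : ZMod 3, a ≠ 0 → a * b = 0 → b = 0 := by decide
      ext j
      rcases Fin.eq_self_or_eq_succAbove i j with rfl | ⟨k, rfl⟩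
      · exact h3 _ _ hi h2
      · exact h1 k)
  exact ⟨E, hE, fun x => by rw [hE']; simp⟩

/-- The number of points of `C` on the hyperplane `f = t`. -/
def cnt {n : ℕ} (C : Finset (Fin n → ZMod 3)) (f : Fin n → ZMod 3) (t : ZMod 3) : ℕ :=
  (C.filter fun x => f ⬝ᵥ x = t).card

/-- Use the functional `f` (shifted by `c`) as first coordinate. -/
theorem exists_slices {n : ℕ} (C : Finset (Fin (n + 1) → ZMod 3)) (f : Fin (n + 1) → ZMod 3)
    (hf : f ≠ 0) (c : ZMod 3) :
    ∃ E : (Fin (n + 1) → ZMod 3) ≃ (Fin (n + 1) → ZMod 3), LP E ∧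
      ∀ t, (slice (img E C) (t + c)).card = cnt C f t := by
  obtain ⟨E, hE, hE'⟩ := exists_coord f hf c
  refine ⟨E, hE, fun t => ?_⟩
  rw [card_slice, cnt]
  symm
  apply Finset.card_bij (fun x _ => E x)
  · intro x hx
    rw [mem_filter] at hx ⊢
    exact ⟨apply_mem_img.2 hx.1, by rw [hE', hx.2]⟩
  · intro x _ y _ h
    exact E.injective h
  · intro y hy
    rw [mem_filter] at hy
    refine ⟨E.symm y, ?_, by simp⟩
    rw [mem_filter]
    refine ⟨mem_img.1 hy.1, ?_⟩
    have := hE' (E.symm y)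
    rw [Equiv.apply_symm_apply, hy.2] at this
    exact (add_right_cancel this).symm

theorem cnt_le {n k : ℕ} (hk : ∀ D : Finset (Fin n → ZMod 3), IsCap D → D.card ≤ k)
    {C : Finset (Fin (n + 1) → ZMod 3)} (hC : IsCap C) {f : Fin (n + 1) → ZMod 3} (hf : f ≠ 0)
    (t : ZMod 3) : cnt C f t ≤ k := by
  obtain ⟨E, hE, h⟩ := exists_slices C f hf 0
  rw [← h]
  exact hk _ (IsCap.slice (hE.isCap hC) _)

/-! ### Double counting -/

theorem sum_zmod3 {M : Type*} [AddCommMonoid M] (F : ZMod 3 → M) :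
    ∑ t, F t = F 0 + F 1 + F 2 := by
  exact Fin.sum_univ_three F

theorem sum_cnt {n : ℕ} (C : Finset (Fin n → ZMod 3)) (f : Fin n → ZMod 3) :
    ∑ t, cnt C f t = C.card := by
  unfold cnt
  exact (Finset.card_eq_sum_card_fiberwise (fun x _ => Finset.mem_univ (f ⬝ᵥ x))).symm

theorem cnt_eq {n : ℕ} (C : Finset (Fin n → ZMod 3)) (f : Fin n → ZMod 3) (t : ZMod 3) :
    cnt C f t = ∑ x ∈ C, if f ⬝ᵥ x = t then 1 else 0 := by
  simp [cnt]

theorem sum_cnt_sq {n : ℕ} (C : Finset (Fin n → ZMod 3)) :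
    ∑ f, ∑ t, cnt C f t ^ 2 =
      ∑ x ∈ C, ∑ y ∈ C, (univ.filter fun f : Fin n → ZMod 3 => f ⬝ᵥ x = f ⬝ᵥ y).card := by
  have h : ∀ f : Fin n → ZMod 3, ∑ t, cnt C f t ^ 2 =
      ∑ x ∈ C, ∑ y ∈ C, if f ⬝ᵥ x = f ⬝ᵥ y then 1 else 0 := by
    intro f
    simp only [cnt_eq, sq, Finset.sum_mul_sum]
    rw [Finset.sum_comm]
    refine Finset.sum_congr rfl fun x _ => ?_
    rw [Finset.sum_comm]
    refine Finset.sum_congr rfl fun y _ => ?_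
    simp [eq_comm]
  simp only [h]
  rw [Finset.sum_comm]
  refine Finset.sum_congr rfl fun x _ => ?_
  rw [Finset.sum_comm]
  refine Finset.sum_congr rfl fun y _ => ?_
  simp

theorem sum_cnt_cube {n : ℕ} (C : Finset (Fin n → ZMod 3)) :
    ∑ f, ∑ t, cnt C f t ^ 3 =
      ∑ x ∈ C, ∑ y ∈ C, ∑ z ∈ C,
        (univ.filter fun f : Fin n → ZMod 3 => f ⬝ᵥ x = f ⬝ᵥ y ∧ f ⬝ᵥ x = f ⬝ᵥ z).card := by
  have h : ∀ f : Fin n → ZMod 3, ∑ t, cnt C f t ^ 3 =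
      ∑ x ∈ C, ∑ y ∈ C, ∑ z ∈ C, if f ⬝ᵥ x = f ⬝ᵥ y ∧ f ⬝ᵥ x = f ⬝ᵥ z then 1 else 0 := by
    intro f
    simp only [cnt_eq, pow_three, Finset.sum_mul_sum]
    rw [Finset.sum_comm]
    refine Finset.sum_congr rfl fun x _ => ?_
    rw [Finset.sum_comm]
    refine Finset.sum_congr rfl fun y _ => ?_
    simp only [Finset.mul_sum]
    rw [Finset.sum_comm]
    refine Finset.sum_congr rfl fun z _ => ?_
    have : ∀ t : ZMod 3, ((if f ⬝ᵥ x = t then 1 else 0) *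
        ((if f ⬝ᵥ y = t then 1 else 0) * if f ⬝ᵥ z = t then 1 else 0) : ℕ) =
        if f ⬝ᵥ x = t then (if f ⬝ᵥ x = f ⬝ᵥ y ∧ f ⬝ᵥ x = f ⬝ᵥ z then 1 else 0) else 0 := by
      intro t
      split_ifs <;> grind
    simp only [this]
    simp
  simp only [h]
  rw [Finset.sum_comm]
  refine Finset.sum_congr rfl fun x _ => ?_
  rw [Finset.sum_comm]
  refine Finset.sum_congr rfl fun y _ => ?_
  rw [Finset.sum_comm]
  refine Finset.sum_congr rfl fun z _ => ?_
  simp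

theorem card_perp {n : ℕ} (u : Fin (n + 1) → ZMod 3) (hu : u ≠ 0) :
    (univ.filter fun f : Fin (n + 1) → ZMod 3 => f ⬝ᵥ u = 0).card = 3 ^ n := by
  obtain ⟨E, hE, h⟩ := exists_slices univ u hu 0
  have h0 := h 0
  have : img E univ = univ := by ext x; simp [mem_img]
  rw [this, cnt] at h0
  have h2 : slice (univ : Finset (Fin (n + 1) → ZMod 3)) (0 + 0) = univ := by
    ext x; simp [mem_slice]
  rw [h2] at h0
  simp only [dotProduct_comm _ u]
  rw [← h0]
  simp [ZMod.card]

theorem card_perp2 {n : ℕ} (u v : Fin (n + 2) → ZMod 3) (hu : u ≠ 0) (hv : v ≠ 0)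
    (h1 : u + v ≠ 0) (h2 : u - v ≠ 0) :
    (univ.filter fun f : Fin (n + 2) → ZMod 3 => f ⬝ᵥ u = 0 ∧ f ⬝ᵥ v = 0).card = 3 ^ n := by
  have key : ∀ f : Fin (n + 2) → ZMod 3,
      (if f ⬝ᵥ u = 0 then 1 else 0) + (if f ⬝ᵥ v = 0 then 1 else 0)
      + (if f ⬝ᵥ (u + v) = 0 then 1 else 0) + (if f ⬝ᵥ (u - v) = 0 then 1 else 0)
      = 1 + 3 * (if f ⬝ᵥ u = 0 ∧ f ⬝ᵥ v = 0 then 1 else 0) := by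
    intro f
    rw [dotProduct_add, dotProduct_sub]
    generalize f ⬝ᵥ u = a
    generalize f ⬝ᵥ v = b
    revert a b
    decide
  have hs := Finset.sum_congr (rfl : (univ : Finset (Fin (n + 2) → ZMod 3)) = univ)
    (fun f _ => key f)
  simp only [Finset.sum_add_distrib, ← Finset.mul_sum, ← Finset.card_filter] at hs
  rw [card_perp u hu, card_perp v hv, card_perp _ h1, card_perp _ h2] at hs
  have hc : ∑ _f : Fin (n + 2) → ZMod 3, 1 = 9 * 3 ^ n := by
    simp [ZMod.card, pow_succ]; ring
  rw [hc, pow_succ] at hs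
  omega

theorem sum_cnt_sq_eq {n : ℕ} (C : Finset (Fin (n + 1) → ZMod 3)) :
    ∑ f, ∑ t, cnt C f t ^ 2 = C.card * 3 ^ (n + 1) + C.card * (C.card - 1) * 3 ^ n := by
  rw [sum_cnt_sq]
  have : ∀ x ∈ C, ∑ y ∈ C,
      (univ.filter fun f : Fin (n + 1) → ZMod 3 => f ⬝ᵥ x = f ⬝ᵥ y).card
      = 3 ^ (n + 1) + (C.card - 1) * 3 ^ n := by
    intro x hx
    rw [← Finset.add_sum_erase _ _ hx]
    congr 1
    · simp [ZMod.card]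
    · rw [Finset.sum_congr rfl (g := fun _ => 3 ^ n)]
      · simp [Finset.card_erase_of_mem hx]
      · intro y hy
        rw [Finset.mem_erase] at hy
        rw [← card_perp (x - y) (sub_ne_zero.2 (Ne.symm hy.1))]
        congr 1
        ext f
        simp [dotProduct_sub, sub_eq_zero]
  rw [Finset.sum_congr rfl this]
  simp
  ring

theorem sum_cnt_cube_eq {n : ℕ} (C : Finset (Fin (n + 2) → ZMod 3)) (hC : IsCap C) :
    ∑ f, ∑ t, cnt C f t ^ 3 = C.card * 3 ^ (n + 2) + 3 * (C.card * (C.card - 1)) * 3 ^ (n + 1)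
      + C.card * (C.card - 1) * (C.card - 2) * 3 ^ n := by
  rw [sum_cnt_cube]
  have hp : ∀ u : Fin (n + 2) → ZMod 3, u ≠ 0 →
    (univ.filter fun f : Fin (n + 2) → ZMod 3 => f ⬝ᵥ u = 0).card = 3 ^ (n + 1) :=
    fun u hu => card_perp u hu
  have h1 : ∀ x ∈ C, ∑ y ∈ C, ∑ z ∈ C,
      (univ.filter fun f : Fin (n + 2) → ZMod 3 => f ⬝ᵥ x = f ⬝ᵥ y ∧ f ⬝ᵥ x = f ⬝ᵥ z).card
      = (3 ^ (n + 2) + (C.card - 1) * 3 ^ (n + 1)) +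
        (C.card - 1) * (3 ^ (n + 1) + (3 ^ (n + 1) + (C.card - 2) * 3 ^ n)) := by
    intro x hx
    rw [← Finset.add_sum_erase _ _ hx]
    congr 1
    · rw [← Finset.add_sum_erase _ _ hx]
      congr 1
      · simp [ZMod.card]
      · rw [Finset.sum_congr rfl (g := fun _ => 3 ^ (n + 1))]
        · simp [Finset.card_erase_of_mem hx]
        · intro y hy
          rw [Finset.mem_erase] at hy
          rw [← hp (x - y) (sub_ne_zero.2 (Ne.symm hy.1))]
          congr 1
          ext f
          simp [dotProduct_sub, sub_eq_zero]
    · rw [Finset.sum_congr rfl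
        (g := fun _ => 3 ^ (n + 1) + (3 ^ (n + 1) + (C.card - 2) * 3 ^ n))]
      · simp [Finset.card_erase_of_mem hx]
      · intro y hy
        have hy' := hy
        rw [Finset.mem_erase] at hy
        have hxy : x - y ≠ 0 := sub_ne_zero.2 (Ne.symm hy.1)
        rw [← Finset.add_sum_erase _ _ hx, ← Finset.add_sum_erase _ _ hy']
        congr 1
        · rw [← hp (x - y) hxy]
          congr 1
          ext f
          simp [dotProduct_sub, sub_eq_zero]
        · congr 1
          · rw [← hp (x - y) hxy]
            congr 1
            ext f
            simp [dotProduct_sub, sub_eq_zero]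
          · rw [Finset.sum_congr rfl (g := fun _ => 3 ^ n)]
            · have : ((C.erase x).erase y).card = C.card - 2 := by
                rw [Finset.card_erase_of_mem hy', Finset.card_erase_of_mem hx]
                rfl
              simp [this]
            · intro z hz
              simp only [Finset.mem_erase] at hz
              have hxz : x - z ≠ 0 := sub_ne_zero.2 (Ne.symm hz.2.1)
              rw [← card_perp2 (x - y) (x - z) hxy hxz]
              · congr 1
                ext f
                simp [dotProduct_sub, sub_eq_zero]
              · intro h
                refine hC x hx y hy.2 z hz.2.2 (Ne.symm hy.1) (Ne.symm hz.2.1)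
                  (Ne.symm hz.1) ?_
                ext i
                have hi := congrFun h i
                simp only [Pi.add_apply, Pi.sub_apply, Pi.zero_apply] at hi ⊢
                generalize x i = a at *
                generalize y i = b at *
                generalize z i = c at *
                clear * - hi
                revert a b c
                decide
              · intro h
                apply hz.1
                have : z - y = 0 := by rw [← h]; abel
                exact sub_eq_zero.1 this
  rw [Finset.sum_congr rfl h1]
  simp only [Finset.sum_const, smul_eq_mul]
  ring

end CapAux

namespace CapAux

open Finset

/-- The standard 4-cap in the plane. -/
def S4 : Finset (Fin 2 → ZMod 3) := univ.filter fun x => x 0 ^ 2 + x 1 ^ 2 = 1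

/-- The standard 9-cap in 3-space. -/
def S9 : Finset (Fin 3 → ZMod 3) := univ.filter fun x => x 0 + x 1 ^ 2 + x 2 ^ 2 = 0

/-- The standard 20-cap in 4-space. -/
def S20 : Finset (Fin 4 → ZMod 3) :=
  univ.filter fun x => x ≠ 0 ∧ x 0 * x 1 + x 2 ^ 2 + x 3 ^ 2 = 0

theorem card_S4 : S4.card = 4 := by decide +kernel
theorem card_S9 : S9.card = 9 := by decide +kernel
theorem card_S20 : S20.card = 20 := by decide +kernel

/-- If all caps with `k` points are equivalent to a complete cap, then `k` is the maximum. -/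
theorem bound_of_class {n k : ℕ} (S : Finset (Fin n → ZMod 3))
    (hS : ∀ p, p ∉ S → ∃ x ∈ S, ∃ y ∈ S, p + x + y = 0)
    (hcl : ∀ C : Finset (Fin n → ZMod 3), IsCap C → C.card = k → ∃ e, LP e ∧ img e C = S)
    (C : Finset (Fin n → ZMod 3)) (hC : IsCap C) : C.card ≤ k := by
  by_contra hlt
  push Not at hlt
  obtain ⟨D, hDC, hD⟩ := Finset.exists_subset_card_eq hlt.le
  obtain ⟨p, hpC, hpD⟩ : ∃ p ∈ C, p ∉ D := by
    by_contra h
    push Not at h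
    have := Finset.card_le_card (show C ⊆ D from h)
    omega
  obtain ⟨e, he, rfl⟩ := hcl D (IsCap.mono hC hDC) hD
  have hep : e p ∉ img e D := by rwa [apply_mem_img]
  obtain ⟨x, hx, y, hy, h⟩ := hS _ hep
  have hsub : img e D ⊆ img e C := Finset.map_subset_map.2 hDC
  have h3 : ∀ a b : ZMod 3, a + b + b = 0 → a = b := by decide
  refine he.isCap hC _ (apply_mem_img.2 hpC) x (hsub hx) y (hsub hy) ?_ ?_ ?_ h
  · rintro h'; rw [h'] at hep; exact hep hx
  · rintro h'; rw [h'] at hep; exact hep hy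
  · rintro rfl
    apply hep
    have : e p = x := by
      ext i
      exact h3 _ _ (congrFun h i)
    rwa [this]

theorem exists_four {α : Type*} [DecidableEq α] {C : Finset α} (h : C.card = 4) :
    ∃ a ∈ C, ∃ b ∈ C, ∃ c ∈ C, ∃ d ∈ C, a ≠ b ∧ a ≠ c ∧ a ≠ d ∧ b ≠ c ∧ b ≠ d ∧ c ≠ d := by
  obtain ⟨a, s, ha, rfl, hs⟩ := Finset.card_eq_succ.1 h
  obtain ⟨b, c, d, hbc, hbd, hcd, rfl⟩ := Finset.card_eq_three.1 hs
  simp only [mem_insert, mem_singleton, not_or] at ha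
  exact ⟨a, by simp, b, by simp, c, by simp, d, by simp, ha.1, ha.2.1, ha.2.2, hbc, hbd, hcd⟩

set_option synthInstance.maxSize 2000 in
set_option synthInstance.maxHeartbeats 1000000 in
theorem class2_aux {C : Finset (Fin 2 → ZMod 3)} (h4 : C.card = 4)
    {a b c d : Fin 2 → ZMod 3} (ha : a ∈ C) (hb : b ∈ C) (hc : c ∈ C) (hd : d ∈ C)
    (hab : a ≠ b) (hac : a ≠ c) (had : a ≠ d) (hcd : c ≠ d)
    (h : a + b = c + d) : ∃ e, LP e ∧ img e C = S4 := by
  have hdet : (a 0 + (a 0 + b 0)) * (c 1 + (a 1 + b 1))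
      - (a 1 + (a 1 + b 1)) * (c 0 + (a 0 + b 0)) ≠ 0 := by
    have key : ∀ a0 a1 b0 b1 c0 c1 d0 d1 : ZMod 3, a0 + b0 = c0 + d0 → a1 + b1 = c1 + d1 →
      ¬ (a0 = b0 ∧ a1 = b1) → ¬ (a0 = c0 ∧ a1 = c1) → ¬ (a0 = d0 ∧ a1 = d1) →
      ¬ (c0 = d0 ∧ c1 = d1) →
      (a0 + (a0 + b0)) * (c1 + (a1 + b1)) - (a1 + (a1 + b1)) * (c0 + (a0 + b0)) ≠ 0 := by
      decide +kernel
    have ext2 : ∀ u v : Fin 2 → ZMod 3, u ≠ v → ¬ (u 0 = v 0 ∧ u 1 = v 1) := by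
      rintro u v huv ⟨h0, h1⟩
      apply huv
      ext i
      fin_cases i
      · exact h0
      · exact h1
    exact key _ _ _ _ _ _ (d 0) (d 1) (congrFun h 0) (congrFun h 1) (ext2 _ _ hab) (ext2 _ _ hac)
      (ext2 _ _ had) (ext2 _ _ hcd)
  obtain ⟨e, he, he'⟩ := exists_LP (n := 2)
    (fun x => x 0 • (a + (a + b)) + x 1 • (c + (a + b))) (-(a + b)) (by
      intro x y
      ext i
      simp
      ring) (by
      intro x hx
      have key : ∀ x0 x1 u0 u1 v0 v1 : ZMod 3, u0 * v1 - u1 * v0 ≠ 0 → x0 * u0 + x1 * v0 = 0 →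
        x0 * u1 + x1 * v1 = 0 → x0 = 0 ∧ x1 = 0 := by decide +kernel
      have := key (x 0) (x 1) _ _ _ _ hdet (by simpa [mul_add] using congrFun hx 0)
        (by simpa [mul_add] using congrFun hx 1)
      ext i
      fin_cases i
      · exact this.1
      · exact this.2)
  have hsub : img e S4 ⊆ C := by
    intro y hy
    rw [mem_img, S4, mem_filter] at hy
    have hy' := he' (e.symm y)
    rw [Equiv.apply_symm_apply] at hy'
    have key : ∀ x0 x1 : ZMod 3, x0 ^ 2 + x1 ^ 2 = 1 → (x0 = 1 ∧ x1 = 0) ∨ (x0 = 2 ∧ x1 = 0) ∨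
      (x0 = 0 ∧ x1 = 1) ∨ (x0 = 0 ∧ x1 = 2) := by decide
    have k3 : ∀ a b c d : ZMod 3, a + b = c + d → 1 * (a + (a + b)) + 0 * (c + (a + b)) + - (a + b) = a
      ∧ 2 * (a + (a + b)) + 0 * (c + (a + b)) + - (a + b) = b
      ∧ 0 * (a + (a + b)) + 1 * (c + (a + b)) + - (a + b) = c
      ∧ 0 * (a + (a + b)) + 2 * (c + (a + b)) + - (a + b) = d := by decide
    rcases key _ _ hy.2 with ⟨h0, h1⟩ | ⟨h0, h1⟩ | ⟨h0, h1⟩ | ⟨h0, h1⟩ <;> rw [h0, h1] at hy'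
    · convert ha
      rw [hy']; ext i
      exact (k3 _ _ _ _ (congrFun h i)).1
    · convert hb
      rw [hy']; ext i
      exact (k3 _ _ _ _ (congrFun h i)).2.1
    · convert hc
      rw [hy']; ext i
      exact (k3 _ _ _ _ (congrFun h i)).2.2.1
    · convert hd
      rw [hy']; ext i
      exact (k3 _ _ _ _ (congrFun h i)).2.2.2
  have heq : img e S4 = C := Finset.eq_of_subset_of_card_le hsub (by rw [card_img, card_S4, h4])
  exact ⟨e.symm, he.symm, by rw [← heq, img_symm_img]⟩

set_option synthInstance.maxSize 2000 in
set_option synthInstance.maxHeartbeats 1000000 in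
theorem class2 (C : Finset (Fin 2 → ZMod 3)) (hC : IsCap C) (h4 : C.card = 4) :
    ∃ e, LP e ∧ img e C = S4 := by
  obtain ⟨a, ha, b, hb, c, hc, d, hd, hab, hac, had, hbc, hbd, hcd⟩ := exists_four h4
  have key : ∀ u0 u1 v0 v1 w0 w1 : ZMod 3, 
      ¬ (u0 = 0 ∧ u1 = 0) → ¬ (v0 = 0 ∧ v1 = 0) → ¬ (w0 = 0 ∧ w1 = 0) →
      ¬ (u0 = v0 ∧ u1 = v1) → ¬ (u0 = w0 ∧ u1 = w1) → ¬ (v0 = w0 ∧ v1 = w1) →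
      ¬ (u0 + v0 = 0 ∧ u1 + v1 = 0) → ¬ (u0 + w0 = 0 ∧ u1 + w1 = 0) →
      ¬ (v0 + w0 = 0 ∧ v1 + w1 = 0) → ¬ (u0 + v0 + w0 = 0 ∧ u1 + v1 + w1 = 0) → 
      (u0 = v0 + w0 ∧ u1 = v1 + w1) ∨ (v0 = u0 + w0 ∧ v1 = u1 + w1) ∨
      (w0 = u0 + v0 ∧ w1 = u1 + v1) := by decide +kernel
  have ext2 : ∀ u v : Fin 2 → ZMod 3, u 0 = v 0 ∧ u 1 = v 1 → u = v := by
    rintro u v ⟨h0, h1⟩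
    ext i
    fin_cases i
    · exact h0
    · exact h1
  have h3 : ∀ u v w : ZMod 3, u + v + w = (v - u) + (w - u) := by decide
  have hz : ∀ u ∈ C, ∀ v ∈ C, ∀ w ∈ C, u ≠ v → u ≠ w → v ≠ w →
      ¬ ((v 0 - u 0) + (w 0 - u 0) = 0 ∧ (v 1 - u 1) + (w 1 - u 1) = 0) := by
    rintro u hu v hv w hw huv huw hvw ⟨h0, h1⟩
    apply hC u hu v hv w hw huv huw hvw
    apply ext2
    exact ⟨(h3 _ _ _).trans h0, (h3 _ _ _).trans h1⟩
  have h4' : ∀ u v w x : ZMod 3, (u - x) + (v - x) + (w - x) = u + v + w := by decide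
  have := key (b 0 - a 0) (b 1 - a 1) (c 0 - a 0) (c 1 - a 1) (d 0 - a 0) (d 1 - a 1)
    (fun h => hab (ext2 _ _ ⟨(sub_eq_zero.1 h.1).symm, (sub_eq_zero.1 h.2).symm⟩))
    (fun h => hac (ext2 _ _ ⟨(sub_eq_zero.1 h.1).symm, (sub_eq_zero.1 h.2).symm⟩))
    (fun h => had (ext2 _ _ ⟨(sub_eq_zero.1 h.1).symm, (sub_eq_zero.1 h.2).symm⟩))
    (fun h => hbc (ext2 _ _ ⟨by simpa using h.1, by simpa using h.2⟩))
    (fun h => hbd (ext2 _ _ ⟨by simpa using h.1, by simpa using h.2⟩))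
    (fun h => hcd (ext2 _ _ ⟨by simpa using h.1, by simpa using h.2⟩))
    (hz a ha b hb c hc hab hac hbc) (hz a ha b hb d hd hab had hbd)
    (hz a ha c hc d hd hac had hcd)
    (fun h => hC b hb c hc d hd hbc hbd hcd (ext2 _ _ ⟨by simpa [h4'] using h.1,
      by simpa [h4'] using h.2⟩))
  have k4 : ∀ a b c d : ZMod 3, b - a = (c - a) + (d - a) → a + b = c + d := by decide
  rcases this with h | h | h
  · exact class2_aux h4 ha hb hc hd hab hac had hcd (ext2 _ _ ⟨k4 _ _ _ _ h.1, k4 _ _ _ _ h.2⟩)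
  · exact class2_aux h4 ha hc hb hd hac hab had hbd (ext2 _ _ ⟨k4 _ _ _ _ h.1, k4 _ _ _ _ h.2⟩)
  · exact class2_aux h4 ha hd hb hc had hab hac hbc (ext2 _ _ ⟨k4 _ _ _ _ h.1, k4 _ _ _ _ h.2⟩)

theorem bound2 (C : Finset (Fin 2 → ZMod 3)) (hC : IsCap C) : C.card ≤ 4 := by
  refine bound_of_class S4 ?_ class2 C hC
  decide +kernel

/-! ### Dimension three -/

theorem exists_f3 (C : Finset (Fin 3 → ZMod 3)) (h9 : C.card = 9) :
    ∃ f : Fin 3 → ZMod 3, f ≠ 0 ∧ 29 < ∑ t, cnt C f t ^ 2 := by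
  by_contra h
  push Not at h
  have h1 := sum_cnt_sq_eq C
  rw [← Finset.add_sum_erase univ _ (mem_univ 0), h9] at h1
  have h2 : ∑ f ∈ univ.erase (0 : Fin 3 → ZMod 3), ∑ t, cnt C f t ^ 2 ≤ 26 • 29 := by
    have : (univ.erase (0 : Fin 3 → ZMod 3)).card = 26 := by
      rw [Finset.card_erase_of_mem (mem_univ _)]; simp [ZMod.card]
    rw [← this]
    exact Finset.sum_le_card_nsmul _ _ _ fun f hf => h f (Finset.ne_of_mem_erase hf)
  have h0 : ∑ t, cnt C 0 t ^ 2 = 81 := by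
    rw [sum_zmod3]; simp [cnt, h9, show (0 : ZMod 3) ≠ 2 by decide]
  rw [h0] at h1
  generalize (∑ f ∈ univ.erase (0 : Fin 3 → ZMod 3), ∑ t, cnt C f t ^ 2) = s at h1 h2
  norm_num at h1 h2
  omega

theorem exists_t3 (F : ZMod 3 → ℕ) (hF : ∀ t, F t ≤ 4) (hs : ∑ t, F t = 9)
    (h2 : 29 < ∑ t, F t ^ 2) : ∃ t, F (0 + t) = 1 ∧ F (1 + t) = 4 ∧ F (2 + t) = 4 := by
  rw [sum_zmod3] at hs h2
  have h0 := hF 0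
  have h1 := hF 1
  have h2' := hF 2
  have e1 : (1 : ZMod 3) + 1 = 2 := by decide
  have e2 : (2 : ZMod 3) + 1 = 0 := by decide
  have e3 : (1 : ZMod 3) + 2 = 0 := by decide
  have e4 : (2 : ZMod 3) + 2 = 1 := by decide
  have key : ∀ a b c : ℕ, a ≤ 4 → b ≤ 4 → c ≤ 4 → a + b + c = 9 → 29 < a ^ 2 + b ^ 2 + c ^ 2 →
      (a = 1 ∧ b = 4 ∧ c = 4) ∨ (b = 1 ∧ c = 4 ∧ a = 4) ∨ (c = 1 ∧ a = 4 ∧ b = 4) := by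
    intro a b c ha hb hc hs h2
    interval_cases a <;> interval_cases b <;> simp at * <;> (try omega) <;> 
      (obtain rfl : c = _ := by (first | exact (by omega : c = 1) | exact (by omega : c = 2) | exact (by omega : c = 3) | exact (by omega : c = 4))) <;> simp at *
  rcases key _ _ _ h0 h1 h2' hs h2 with h | h | h
  · exact ⟨0, by simpa using h⟩
  · exact ⟨1, by simpa [e1, e2] using h⟩
  · exact ⟨2, by simpa [e3, e4] using h⟩

end CapAux

namespace CapAux

open Finset

theorem zmod3_cases (t : ZMod 3) : t = 0 ∨ t = 1 ∨ t = 2 := by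
  revert t; decide

theorem class3 (C : Finset (Fin 3 → ZMod 3)) (hC : IsCap C) (h9 : C.card = 9) :
    ∃ e, LP e ∧ img e C = S9 := by
  obtain ⟨f, hf, h29⟩ := exists_f3 C h9
  obtain ⟨t, ht0, ht1, ht2⟩ := exists_t3 (cnt C f) (cnt_le bound2 hC hf)
    ((sum_cnt C f).trans h9) h29
  obtain ⟨E, hE, hs⟩ := exists_slices C f hf (-t)
  rw [← hs, add_neg_cancel_right] at ht0 ht1 ht2
  -- normalise the slice at 2
  obtain ⟨e2, he2, hS4⟩ := class2 _ (IsCap.slice (hE.isCap hC) 2) ht2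
  obtain ⟨E2, hE2, hs2⟩ := exists_lift he2
  rw [← card_img e2, ← hs2] at ht0 ht1
  rw [← hs2] at hS4
  have hC2 : IsCap (img E2 (img E C)) := hE2.isCap (hE.isCap hC)
  generalize hCd : img E2 (img E C) = C' at *
  -- shear the single point of the slice at 0 to the origin
  obtain ⟨p, hp⟩ := Finset.card_eq_one.1 ht0
  obtain ⟨E3, hE3, hs3⟩ := exists_shear p (1 : ZMod 3)
  obtain ⟨E4, hE4, hs4⟩ := exists_shear p (1 : ZMod 3)
  obtain ⟨E5, hE5, hs5⟩ := exists_shear (-p) (1 : ZMod 3)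
  have hC3 := hE5.isCap hC2
  have k0 : ∀ x ∈ slice (img E5 C') 0, x = 0 := by
    intro x hx
    have := (hs5 C' 0 (x + p)).1 (by simpa using hx)
    rw [hp, mem_singleton] at this
    simpa using this
  have k0' : (0 : Fin 2 → ZMod 3) ∈ slice (img E5 C') 0 := by
    have := (hs5 C' 0 p).2 (by rw [hp]; simp)
    simpa using this
  have k2 : slice (img E5 C') 2 = S4 := by
    rw [← hS4]
    ext x
    have := hs5 C' 2 x
    rwa [show (2 + 1 : ZMod 3) = 0 by decide, zero_smul, add_zero] at this
  have k1 : (slice (img E5 C') 1).card = 4 := by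
    rw [← ht1]
    symm
    apply Finset.card_bij (fun x _ => x + ((1 : ZMod 3) + 1) • (-p))
    · intro x hx
      exact (hs5 C' 1 x).2 hx
    · intro x _ y _ h
      exact add_right_cancel h
    · intro y hy
      refine ⟨y - ((1 : ZMod 3) + 1) • (-p), ?_, by abel⟩
      apply (hs5 C' 1 _).1
      simpa using hy
  have ext2 : ∀ u v : Fin 2 → ZMod 3, u 0 = v 0 → u 1 = v 1 → u = v := by
    rintro u v h0 h1
    ext i
    fin_cases i
    · exact h0
    · exact h1
  have k1a : ∀ y ∈ slice (img E5 C') 1, y 0 ^ 2 + y 1 ^ 2 ≠ 1 := by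
    intro y hy h
    refine IsCap.slices hC3 k0' hy (z := -y) ?_ (by simp)
    rw [k2, S4, mem_filter]
    simpa using h
  have k1b : (0 : Fin 2 → ZMod 3) ∉ slice (img E5 C') 1 := by
    intro h0
    have hcap := IsCap.slice hC3 1
    have hneg : ∀ y ∈ slice (img E5 C') 1, y ≠ 0 → -y ∉ slice (img E5 C') 1 := by
      intro y hy hy0 hy'
      refine hcap 0 h0 y hy (-y) hy' (Ne.symm hy0) ?_ ?_ (by simp)
      · intro h; exact hy0 (by simpa using h.symm)
      · intro h
        apply hy0
        have k : ∀ a : ZMod 3, a = -a → a = 0 := by decide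
        ext i
        exact k _ (congrFun h i)
    have hval : ∀ y : Fin 2 → ZMod 3, y 0 ^ 2 + y 1 ^ 2 ≠ 1 → y = 0 ∨ y = ![1, 1] ∨
        y = -![1, 1] ∨ y = ![1, 2] ∨ y = -![1, 2] := by decide +kernel
    by_cases ha : ![1, 1] ∈ slice (img E5 C') 1 <;>
      by_cases hb : ![1, 2] ∈ slice (img E5 C') 1
    all_goals
      have ha' := hneg ![1, 1]
      have hb' := hneg ![1, 2]
      have hne1 : (![1, 1] : Fin 2 → ZMod 3) ≠ 0 := by decide
      have hne2 : (![1, 2] : Fin 2 → ZMod 3) ≠ 0 := by decide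
    · have : slice (img E5 C') 1 ⊆ {0, ![1, 1], ![1, 2]} := by
        intro y hy
        rcases hval y (k1a y hy) with h | h | h | h | h
        · simp [h]
        · simp [h]
        · exact absurd (h ▸ hy) (ha' ha hne1)
        · simp [h]
        · exact absurd (h ▸ hy) (hb' hb hne2)
      have := (Finset.card_le_card this).trans Finset.card_le_three
      omega
    · have : slice (img E5 C') 1 ⊆ {0, ![1, 1], -![1, 2]} := by
        intro y hy
        rcases hval y (k1a y hy) with h | h | h | h | h
        · simp [h]
        · simp [h]
        · exact absurd (h ▸ hy) (ha' ha hne1)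
        · exact absurd (h ▸ hy) hb
        · rw [h]; simp
      have := (Finset.card_le_card this).trans Finset.card_le_three
      omega
    · have : slice (img E5 C') 1 ⊆ {0, -![1, 1], ![1, 2]} := by
        intro y hy
        rcases hval y (k1a y hy) with h | h | h | h | h
        · simp [h]
        · exact absurd (h ▸ hy) ha
        · rw [h]; simp
        · simp [h]
        · exact absurd (h ▸ hy) (hb' hb hne2)
      have := (Finset.card_le_card this).trans Finset.card_le_three
      omega
    · have : slice (img E5 C') 1 ⊆ {0, -![1, 1], -![1, 2]} := by
        intro y hy
        rcases hval y (k1a y hy) with h | h | h | h | h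
        · simp [h]
        · exact absurd (h ▸ hy) ha
        · rw [h]; simp
        · exact absurd (h ▸ hy) hb
        · rw [h]; simp
      have := (Finset.card_le_card this).trans Finset.card_le_three
      omega
  have hsub : img E5 C' ⊆ S9 := by
    intro x hx
    have hx' := tail_mem_slice.2 hx
    rw [S9, mem_filter]
    refine ⟨mem_univ _, ?_⟩
    have e0 : Fin.tail x 0 = x 1 := rfl
    have e1 : Fin.tail x 1 = x 2 := rfl
    rcases zmod3_cases (x 0) with h | h | h <;> rw [h] at hx' ⊢
    · have := k0 _ hx'
      rw [← e0, ← e1, this]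
      simp
    · have h1 := k1a _ hx'
      have h2 : Fin.tail x ≠ 0 := fun h => k1b (h ▸ hx')
      have h3 : ¬ (x 1 = 0 ∧ x 2 = 0) := fun h => h2 (ext2 _ _ h.1 h.2)
      rw [e0, e1] at h1
      revert h1 h3
      generalize x 1 = a
      generalize x 2 = b
      revert a b
      decide
    · rw [k2, S4, mem_filter, e0, e1] at hx'
      rw [add_assoc, hx'.2]
      decide
  have hcard : C'.card = 9 := by rw [← hCd, card_img, card_img, h9]
  have heq : img E5 C' = S9 :=
    Finset.eq_of_subset_of_card_le hsub (by rw [card_img, card_S9, hcard])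
  exact ⟨(E.trans E2).trans E5, (hE.trans hE2).trans hE5, by
    rw [img_trans, img_trans, hCd, heq]⟩

theorem bound3 (C : Finset (Fin 3 → ZMod 3)) (hC : IsCap C) : C.card ≤ 9 := by
  refine bound_of_class S9 ?_ class3 C hC
  decide +kernel

/-! ### Dimension four -/

theorem type4 (a b c : ℕ) (ha : a ≤ 9) (hb : b ≤ 9) (hc : c ≤ 9) (hs : a + b + c = 20)
    (h2 : 15502 + 10 * (a ^ 3 + b ^ 3 + c ^ 3) < 183 * (a ^ 2 + b ^ 2 + c ^ 2)) :
    (a = 2 ∧ b = 9 ∧ c = 9) ∨ (b = 2 ∧ c = 9 ∧ a = 9) ∨ (c = 2 ∧ a = 9 ∧ b = 9) := by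
  have key : ∀ a ∈ Finset.range 10, ∀ b ∈ Finset.range 10, ∀ c ∈ Finset.range 10,
    a + b + c = 20 →
    15502 + 10 * (a ^ 3 + b ^ 3 + c ^ 3) < 183 * (a ^ 2 + b ^ 2 + c ^ 2) → 
    (a = 2 ∧ b = 9 ∧ c = 9) ∨ (b = 2 ∧ c = 9 ∧ a = 9) ∨ (c = 2 ∧ a = 9 ∧ b = 9) := by
    decide +kernel
  exact key a (by simp; omega) b (by simp; omega) c (by simp; omega) hs h2

theorem exists_f4 (C : Finset (Fin 4 → ZMod 3)) (hC : IsCap C) (h20 : C.card = 20) :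
    ∃ f : Fin 4 → ZMod 3, f ≠ 0 ∧
      15502 + 10 * ∑ t, cnt C f t ^ 3 < 183 * ∑ t, cnt C f t ^ 2 := by
  by_contra h
  push Not at h
  have h1 := sum_cnt_sq_eq C
  have h1' := sum_cnt_cube_eq C hC
  rw [← Finset.add_sum_erase univ _ (mem_univ 0), h20] at h1 h1'
  have h2 : ∑ f ∈ univ.erase (0 : Fin 4 → ZMod 3), 183 * ∑ t, cnt C f t ^ 2
      ≤ ∑ f ∈ univ.erase (0 : Fin 4 → ZMod 3), (15502 + 10 * ∑ t, cnt C f t ^ 3) :=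
    Finset.sum_le_sum fun f hf => h f (Finset.ne_of_mem_erase hf)
  have hc : (univ.erase (0 : Fin 4 → ZMod 3)).card = 80 := by
    rw [Finset.card_erase_of_mem (mem_univ _)]; simp [ZMod.card]
  rw [Finset.sum_add_distrib, ← Finset.mul_sum, ← Finset.mul_sum, Finset.sum_const, hc] at h2
  have h0 : ∑ t, cnt C 0 t ^ 2 = 400 := by
    rw [sum_zmod3]; simp [cnt, h20, show (0 : ZMod 3) ≠ 2 by decide]
  have h0' : ∑ t, cnt C 0 t ^ 3 = 8000 := by
    rw [sum_zmod3]; simp [cnt, h20, show (0 : ZMod 3) ≠ 2 by decide]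
  rw [h0] at h1
  rw [h0'] at h1'
  generalize (∑ f ∈ univ.erase (0 : Fin 4 → ZMod 3), ∑ t, cnt C f t ^ 2) = s at h1 h2
  generalize (∑ f ∈ univ.erase (0 : Fin 4 → ZMod 3), ∑ t, cnt C f t ^ 3) = s' at h1' h2
  norm_num at h1 h1' h2
  omega

theorem exists_t4 (F : ZMod 3 → ℕ) (hF : ∀ t, F t ≤ 9) (hs : ∑ t, F t = 20)
    (h2 : 15502 + 10 * ∑ t, F t ^ 3 < 183 * ∑ t, F t ^ 2) :
    ∃ t, F (0 + t) = 2 ∧ F (1 + t) = 9 ∧ F (2 + t) = 9 := by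
  rw [sum_zmod3] at hs
  rw [sum_zmod3, sum_zmod3] at h2
  have e1 : (1 : ZMod 3) + 1 = 2 := by decide
  have e2 : (2 : ZMod 3) + 1 = 0 := by decide
  have e3 : (1 : ZMod 3) + 2 = 0 := by decide
  have e4 : (2 : ZMod 3) + 2 = 1 := by decide
  rcases type4 _ _ _ (hF 0) (hF 1) (hF 2) hs h2 with h | h | h
  · exact ⟨0, by simpa using h⟩
  · exact ⟨1, by simpa [e1, e2] using h⟩
  · exact ⟨2, by simpa [e3, e4] using h⟩

/-- The points of `AG(3,3)` allowed in the third slice. -/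
def R (d : Fin 3 → ZMod 3) : Finset (Fin 3 → ZMod 3) := univ.filter fun y => 
  (-y - d) 0 + (-y - d) 1 ^ 2 + (-y - d) 2 ^ 2 ≠ 0 ∧
  (-y + d) 0 + (-y + d) 1 ^ 2 + (-y + d) 2 ^ 2 ≠ 0

/-- Ordered pairs of points on lines inside `R d`. -/
def Ln (d : Fin 3 → ZMod 3) : Finset ((Fin 3 → ZMod 3) × (Fin 3 → ZMod 3)) :=
  (R d ×ˢ R d).filter fun q => q.1 ≠ q.2 ∧ - q.1 - q.2 ∈ R d

theorem R_facts : ∀ d : Fin 3 → ZMod 3, (d 1 ≠ 0 ∨ d 2 ≠ 0) → (R d).card = 12 ∧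
    (Ln d).card = 72 ∧ ∀ x ∈ R d, ((Ln d).filter fun q => q.1 = x).card = 6 := by
  decide +kernel

end CapAux

namespace CapAux

open Finset

theorem neg_sub_eq_self {n : ℕ} {x y : Fin n → ZMod 3} (h : y = -x - y) : x = y := by
  have k : ∀ a b : ZMod 3, b = -a - b → a = b := by decide
  ext i
  exact (k _ _ (congrFun h i))

theorem no_nine (d : Fin 3 → ZMod 3) (hd : d 1 ≠ 0 ∨ d 2 ≠ 0) (B : Finset (Fin 3 → ZMod 3))
    (hB : IsCap B) (hBR : B ⊆ R d) : B.card ≤ 8 := by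
  obtain ⟨hR, hL, h6⟩ := R_facts d hd
  set U := (Ln d).filter fun q => q.1 ∈ R d \ B with hU
  have cU : U.card = (R d \ B).card * 6 := by
    rw [hU, ← Finset.sum_card_fiberwise_eq_card_filter, Finset.sum_const_nat]
    intro x hx
    exact h6 x (mem_sdiff.1 hx).1
  have hsub : Ln d ⊆ U ∪ U.image (fun q => (-q.1 - q.2, q.1)) ∪
      U.image (fun q => (q.2, -q.1 - q.2)) := by
    rintro ⟨x, y⟩ hq
    have hq' := hq
    simp only [Ln, mem_filter, mem_product] at hq'
    obtain ⟨⟨hx, hy⟩, hxy, hz⟩ := hq'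
    have hyz : y ≠ -x - y := fun h => hxy (neg_sub_eq_self h)
    have hxz : x ≠ -x - y := fun h => hxy (neg_sub_eq_self (h.trans (by abel))).symm
    simp only [mem_union, mem_image, Prod.mk.injEq, hU, mem_filter, mem_sdiff, Prod.exists, Ln,
      mem_product]
    by_cases h1 : x ∈ B
    · by_cases h2 : y ∈ B
      · right
        have h3 : -x - y ∉ B := fun h3 => hB x h1 y h2 _ h3 hxy hxz hyz (by abel)
        refine ⟨-x - y, x, ⟨⟨⟨hz, hx⟩, hxz.symm, ?_⟩, hz, h3⟩, rfl, by abel⟩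
        rwa [show -(-x - y) - x = y by abel]
      · left; right
        refine ⟨y, -x - y, ⟨⟨⟨hy, hz⟩, hyz, ?_⟩, hy, h2⟩, by abel, rfl⟩
        rwa [show -y - (-x - y) = x by abel]
    · left; left
      exact ⟨⟨⟨hx, hy⟩, hxy, hz⟩, hx, h1⟩
  have h1 := (Finset.card_le_card hsub).trans (Finset.card_union_le _ _)
  have h2 := Finset.card_union_le U (U.image (fun q => (-q.1 - q.2, q.1)))
  have h3 := Finset.card_image_le (s := U) (f := fun q => (-q.1 - q.2, q.1))
  have h4 := Finset.card_image_le (s := U) (f := fun q => (q.2, -q.1 - q.2))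
  have h5 := Finset.card_sdiff_add_card_eq_card hBR
  omega

theorem class4 (C : Finset (Fin 4 → ZMod 3)) (hC : IsCap C) (h20 : C.card = 20) :
    ∃ e, LP e ∧ img e C = S20 := by
  obtain ⟨f, hf, h29⟩ := exists_f4 C hC h20
  obtain ⟨t, ht0, ht1, ht2⟩ := exists_t4 (cnt C f) (cnt_le bound3 hC hf)
    ((sum_cnt C f).trans h20) h29
  obtain ⟨E, hE, hs⟩ := exists_slices C f hf (-t)
  rw [← hs, add_neg_cancel_right] at ht0 ht1 ht2
  -- normalise the slice at 1
  obtain ⟨e2, he2, hS9⟩ := class3 _ (IsCap.slice (hE.isCap hC) 1) ht1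
  obtain ⟨E2, hE2, hs2⟩ := exists_lift he2
  rw [← card_img e2, ← hs2] at ht0 ht2
  rw [← hs2] at hS9
  have hC2 : IsCap (img E2 (img E C)) := hE2.isCap (hE.isCap hC)
  have hcard : (img E2 (img E C)).card = 20 := by rw [card_img, card_img, h20]
  generalize hCd : img E2 (img E C) = C' at *
  obtain ⟨p, q, hpq, hp⟩ := Finset.card_eq_two.1 ht0
  obtain ⟨E5, hE5, hs5⟩ := exists_shear (-(p + q)) (2 : ZMod 3)
  have hC3 := hE5.isCap hC2
  -- the slice at 0 is now symmetric
  have e2s : ∀ x : Fin 3 → ZMod 3, (2 : ZMod 3) • x = -x := by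
    intro x
    ext i
    have : ∀ a : ZMod 3, 2 * a = -a := by decide
    exact (this (x i))
  have e2a : ∀ x : Fin 3 → ZMod 3, x + x = -x := by
    intro x
    ext i
    have : ∀ a : ZMod 3, a + a = -a := by decide
    exact (this (x i))
  have ep : p + (p + q) = -(p - q) := by
    rw [← add_assoc, e2a]; abel
  have eq' : q + (p + q) = p - q := by
    rw [add_comm p q, ← add_assoc, e2a]; abel
  have k0 : ∀ x ∈ slice (img E5 C') 0, x = p - q ∨ x = -(p - q) := by
    intro x hx
    have h := (hs5 C' 0 (x - (p + q))).1 (by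
      rw [zero_add, e2s, neg_neg, sub_add_cancel]; exact hx)
    rw [hp, mem_insert, mem_singleton, sub_eq_iff_eq_add, sub_eq_iff_eq_add, ep, eq'] at h
    exact h.symm
  have k0a : p - q ∈ slice (img E5 C') 0 := by
    have := (hs5 C' 0 q).2 (by rw [hp]; simp)
    rwa [zero_add, e2s, neg_neg, eq'] at this
  have k0b : -(p - q) ∈ slice (img E5 C') 0 := by
    have := (hs5 C' 0 p).2 (by rw [hp]; simp)
    rwa [zero_add, e2s, neg_neg, ep] at this
  have hd0 : p - q ≠ 0 := sub_ne_zero.2 hpq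
  generalize p - q = d at *
  have k1 : slice (img E5 C') 1 = S9 := by
    rw [← hS9]
    ext x
    have := hs5 C' 1 x
    rwa [show (1 + 2 : ZMod 3) = 0 by decide, zero_smul, add_zero] at this
  have k2 : (slice (img E5 C') 2).card = 9 := by
    rw [← ht2]
    symm
    apply Finset.card_bij (fun x _ => x + ((2 : ZMod 3) + 2) • (-(p + q)))
    · intro x hx
      exact (hs5 C' 2 x).2 hx
    · intro x _ y _ h
      exact add_right_cancel h
    · intro y hy
      refine ⟨y - ((2 : ZMod 3) + 2) • (-(p + q)), ?_, by abel⟩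
      apply (hs5 C' 2 _).1
      simpa using hy
  have mem9 : ∀ x : Fin 3 → ZMod 3, x ∈ S9 ↔ x 0 + x 1 ^ 2 + x 2 ^ 2 = 0 := by
    intro x; simp [S9]
  have hR : slice (img E5 C') 2 ⊆ R d := by
    intro y hy
    rw [R, mem_filter]
    refine ⟨mem_univ _, ?_, ?_⟩
    · rw [Ne, ← mem9, ← k1]
      intro h
      exact IsCap.slices hC3 k0a h hy (by abel)
    · rw [Ne, ← mem9, ← k1]
      intro h
      exact IsCap.slices hC3 k0b h hy (by abel)
  have hd12 : d 1 = 0 ∧ d 2 = 0 := by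
    by_contra h
    have := no_nine d (by tauto) _ (IsCap.slice hC3 2) hR
    omega
  have hd00 : d 0 ≠ 0 := by
    intro h
    apply hd0
    ext i
    fin_cases i
    · exact h
    · exact hd12.1
    · exact hd12.2
  have hsub : img E5 C' ⊆ S20 := by
    intro x hx
    have hx' := tail_mem_slice.2 hx
    rw [S20, mem_filter]
    refine ⟨mem_univ _, ?_⟩
    have e0 : Fin.tail x 0 = x 1 := rfl
    have e1 : Fin.tail x 1 = x 2 := rfl
    have e2 : Fin.tail x 2 = x 3 := rfl
    rcases zmod3_cases (x 0) with h | h | h <;> rw [h] at hx'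
    · have h2 : x 1 ≠ 0 ∧ x 2 = 0 ∧ x 3 = 0 := by
        rw [← e0, ← e1, ← e2]
        rcases k0 _ hx' with h | h <;> rw [h] <;> simp [hd12, hd00]
      refine ⟨fun h0 => h2.1 (by rw [h0]; rfl), ?_⟩
      rw [h, h2.2.1, h2.2.2]; simp
    · rw [k1, mem9, e0, e1, e2] at hx'
      refine ⟨fun h0 => ?_, by rw [h, one_mul, hx']⟩
      rw [h0] at h
      exact absurd h (by decide)
    · have h3 := hR hx'
      rw [R, mem_filter] at h3
      obtain ⟨-, h3, h4⟩ := h3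
      simp only [Pi.sub_apply, Pi.add_apply, Pi.neg_apply, e0, e1, e2, hd12.1, hd12.2] at h3 h4
      refine ⟨fun h0 => ?_, ?_⟩
      · rw [h0] at h
        exact absurd h (by decide)
      · rw [h]
        revert h3 h4 hd00
        generalize d 0 = a
        generalize x 1 = b
        generalize x 2 = c
        generalize x 3 = d
        revert a b c d
        decide +kernel
  have heq : img E5 C' = S20 :=
    Finset.eq_of_subset_of_card_le hsub (by rw [card_img, card_S20, hcard])
  exact ⟨(E.trans E2).trans E5, (hE.trans hE2).trans hE5, by
    rw [img_trans, img_trans, hCd, heq]⟩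

theorem bound4 (C : Finset (Fin 4 → ZMod 3)) (hC : IsCap C) : C.card ≤ 20 := by
  refine bound_of_class S20 ?_ class4 C hC
  decide +kernel

end CapAux

namespace CapAux

open Finset

/-! ### Reduction of the counting problem to `S20` -/

set_option synthInstance.maxHeartbeats 400000 in
set_option synthInstance.maxSize 1000 in
theorem isCap_S20 : IsCap S20 := by
  have sc : ∀ a b c d : ZMod 3, a * b + c ^ 2 + d ^ 2 = 0 → ∀ a' b' c' d' : ZMod 3,
      a' * b' + c' ^ 2 + d' ^ 2 = 0 →
      (-a - a') * (-b - b') + (-c - c') ^ 2 + (-d - d') ^ 2 = 0 →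
      (a = 0 ∧ b = 0 ∧ c = 0 ∧ d = 0) ∨ (a' = 0 ∧ b' = 0 ∧ c' = 0 ∧ d' = 0) ∨
      (-a - a' = 0 ∧ -b - b' = 0 ∧ -c - c' = 0 ∧ -d - d' = 0) ∨
      (a = a' ∧ b = b' ∧ c = c' ∧ d = d') := by
    decide +kernel
  have ext4 : ∀ u v : Fin 4 → ZMod 3, u 0 = v 0 ∧ u 1 = v 1 ∧ u 2 = v 2 ∧ u 3 = v 3 →
      u = v := by
    rintro u v ⟨h0, h1, h2, h3⟩
    ext i
    fin_cases i
    · exact h0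
    · exact h1
    · exact h2
    · exact h3
  have key : ∀ x y : Fin 4 → ZMod 3, x ∈ S20 → y ∈ S20 → x ≠ y → -x - y ∉ S20 := by
    intro x y hx hy hxy hz
    simp only [S20, mem_filter, mem_univ, true_and] at hx hy hz
    rcases sc _ _ _ _ hx.2 _ _ _ _ hy.2 hz.2 with h | h | h | h
    · exact hx.1 (ext4 _ _ h)
    · exact hy.1 (ext4 _ _ h)
    · exact hz.1 (ext4 _ _ h)
    · exact hxy (ext4 _ _ h)
  intro x hx y hy z hz hxy _ _ h
  apply key x y hx hy hxy
  rwa [show -x - y = z by rw [← sub_eq_zero, ← neg_eq_zero, ← h]; abel]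

theorem maximalCap_iff (C : Finset (Fin 4 → ZMod 3)) :
    MaximalCap C ↔ IsCap C ∧ C.card = 20 := by
  constructor
  · rintro ⟨h1, h2⟩
    refine ⟨h1, le_antisymm (bound4 C h1) ?_⟩
    have := h2 S20 isCap_S20
    rwa [card_S20] at this
  · rintro ⟨h1, h2⟩
    exact ⟨h1, fun D hD => h2 ▸ bound4 D hD⟩

theorem LP.maximalCap {e : (Fin 4 → ZMod 3) ≃ (Fin 4 → ZMod 3)} (he : LP e)
    {T : Finset (Fin 4 → ZMod 3)} (hT : MaximalCap T) : MaximalCap (img e T) := by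
  rw [maximalCap_iff] at hT ⊢
  exact ⟨he.isCap hT.1, by rw [card_img, hT.2]⟩

theorem disjoint_img {e : (Fin 4 → ZMod 3) ≃ (Fin 4 → ZMod 3)}
    {S T : Finset (Fin 4 → ZMod 3)} (h : Disjoint S T) : Disjoint (img e S) (img e T) := by
  rw [Finset.disjoint_left] at h ⊢
  intro x hx hx'
  exact h (mem_img.1 hx) (mem_img.1 hx')

theorem reduce (S : Finset (Fin 4 → ZMod 3)) (hS : MaximalCap S) :
    Nat.card {T : Finset (Fin 4 → ZMod 3) // MaximalCap T ∧ Disjoint S T} =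
    Nat.card {T : Finset (Fin 4 → ZMod 3) // MaximalCap T ∧ Disjoint S20 T} := by
  rw [maximalCap_iff] at hS
  obtain ⟨e, he, heS⟩ := class4 S hS.1 hS.2
  refine Nat.card_congr
    { toFun := fun T => ⟨img e T.1, he.maximalCap T.2.1, heS ▸ disjoint_img T.2.2⟩
      invFun := fun T => ⟨img e.symm T.1, he.symm.maximalCap T.2.1, ?_⟩
      left_inv := ?_
      right_inv := ?_ }
  · have := disjoint_img (e := e.symm) T.2.2
    rwa [show img e.symm S20 = S by rw [← heS, img_symm_img]] at this
  · intro T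
    exact Subtype.ext (img_symm_img _ _)
  · intro T
    exact Subtype.ext (img_img_symm _ _)

/-! ### The shape of a maximal cap -/

/-- The general quadratic form in four variables. -/
def quad (c : ℕ → ZMod 3) (x : Fin 4 → ZMod 3) : ZMod 3 :=
  c 0 * (x 0 * x 0) + (c 1 * (x 0 * x 1) + (c 2 * (x 1 * x 1) + (c 3 * (x 2 * x 2) +
  (c 4 * (x 0 * x 2) + (c 5 * (x 1 * x 2) + (c 6 * (x 3 * x 3) + (c 7 * (x 0 * x 3) +
  (c 8 * (x 1 * x 3) + (c 9 * (x 2 * x 3) + 0)))))))))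

theorem additive_expand (g : (Fin 4 → ZMod 3) → (Fin 4 → ZMod 3))
    (hadd : ∀ x y, g (x + y) = g x + g y) (x : Fin 4 → ZMod 3) (i : Fin 4) :
    g x i = x 0 * g (Pi.single 0 1) i + x 1 * g (Pi.single 1 1) i + x 2 * g (Pi.single 2 1) i
      + x 3 * g (Pi.single 3 1) i := by
  have h0 : g 0 = 0 := by simpa using hadd 0 0
  have hs : ∀ (t : ZMod 3) y, g (t • y) = t • g y := by
    intro t y
    rcases zmod3_cases t with rfl | rfl | rfl
    · simp [h0]
    · simp
    · rw [show (2 : ZMod 3) = 1 + 1 by decide, add_smul, add_smul, hadd]; simp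
  have hx : x = x 0 • Pi.single 0 1 + x 1 • Pi.single 1 1 + x 2 • Pi.single 2 1
      + x 3 • Pi.single 3 1 := by
    ext i
    fin_cases i <;> simp
  conv_lhs => rw [hx]
  simp only [hadd, hs, Pi.add_apply, Pi.smul_apply, smul_eq_mul]

theorem shape (T : Finset (Fin 4 → ZMod 3)) (hT : MaximalCap T) :
    ∃ (a : Fin 4 → ZMod 3) (c : ℕ → ZMod 3), ∀ x, x + a ∈ T ↔ x ≠ 0 ∧ quad c x = 0 := by
  rw [maximalCap_iff] at hT
  obtain ⟨e, he, heT⟩ := class4 T hT.1 hT.2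
  set a := e.symm 0 with ha
  have hea : e a = 0 := by simp [ha]
  have hadd : ∀ x y, e (x + y + a) = e (x + a) + e (y + a) := by
    intro x y
    have h1 := he.affine (x + a) (y + a)
    have h2 := he.affine (x + y + a) a
    rw [show x + y + a + a = x + a + (y + a) by abel, hea, add_zero] at h2
    rw [← h2]; exact h1
  set g : (Fin 4 → ZMod 3) → (Fin 4 → ZMod 3) := fun x => e (x + a) with hg
  have hx := additive_expand g hadd
  have hm : ∀ x, x + a ∈ T ↔ x ≠ 0 ∧ g x 0 * g x 1 + g x 2 ^ 2 + g x 3 ^ 2 = 0 := by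
    intro x
    have h1 : x + a ∈ T ↔ e (x + a) ∈ S20 := by
      rw [← heT, mem_img, Equiv.symm_apply_apply]
    have h2 : g x = 0 ↔ x = 0 := by
      constructor
      · intro h
        have h' : e (x + a) = e a := h.trans hea.symm
        simpa using e.injective h'
      · rintro rfl
        show e (0 + a) = 0
        rw [zero_add, hea]
    rw [h1, S20, mem_filter]
    simp only [mem_univ, true_and]
    exact and_congr h2.not Iff.rfl
  generalize g (Pi.single 0 1) = u at hx
  generalize g (Pi.single 1 1) = v at hx
  generalize g (Pi.single 2 1) = w at hx
  generalize g (Pi.single 3 1) = z at hx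
  let l : List (ZMod 3) := [u 0 * u 1 + u 2 ^ 2 + u 3 ^ 2,
    u 0 * v 1 + u 1 * v 0 + 2 * u 2 * v 2 + 2 * u 3 * v 3,
    v 0 * v 1 + v 2 ^ 2 + v 3 ^ 2,
    w 0 * w 1 + w 2 ^ 2 + w 3 ^ 2,
    u 0 * w 1 + u 1 * w 0 + 2 * u 2 * w 2 + 2 * u 3 * w 3,
    v 0 * w 1 + v 1 * w 0 + 2 * v 2 * w 2 + 2 * v 3 * w 3,
    z 0 * z 1 + z 2 ^ 2 + z 3 ^ 2,
    u 0 * z 1 + u 1 * z 0 + 2 * u 2 * z 2 + 2 * u 3 * z 3,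
    v 0 * z 1 + v 1 * z 0 + 2 * v 2 * z 2 + 2 * v 3 * z 3,
    w 0 * z 1 + w 1 * z 0 + 2 * w 2 * z 2 + 2 * w 3 * z 3]
  refine ⟨a, fun k => l.getD k 0, fun x => ?_⟩
  rw [hm, hx, hx, hx, hx, quad]
  simp only [l, List.getD_cons_zero, List.getD_cons_succ]
  refine and_congr_right fun _ => ?_
  refine Eq.congr ?_ rfl
  ring

end CapAux

namespace CapAux

open Finset

/-! ### A verified search -/

/-- Strict application: forces the kernel to evaluate `n` first. -/
def force {α : Type} (n : ℕ) (f : ℕ → α) : α := Nat.rec (f 0) (fun k _ => f (Nat.succ k)) n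

theorem force_eq {α : Type} (n : ℕ) (f : ℕ → α) : force n f = f n := by
  cases n <;> rfl

/-- Bit-sliced addition over `ZMod 3`. -/
def addP (p n P N : ℕ) (k : ℕ → ℕ → Bool) : Bool :=
  force (Nat.xor (Nat.lor p N) (Nat.lor n P)) fun t =>
  force (Nat.xor (Nat.lor n N) t) fun p' =>
  force (Nat.xor (Nat.lor p P) t) fun n' => k p' n'

/-- Test that the points selected by `M` and `D` are in the support, and then continue. -/
def chk (M D : ℕ) (k : ℕ → ℕ → Bool) (p n : ℕ) : Bool :=
  force (Nat.land M D) fun md => cond (Nat.beq (Nat.land md (Nat.lor p n)) md) (k p n) true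

/-- Depth-first search over the coefficients of a quadratic form. -/
def go (M : ℕ) (leaf : ℕ → Bool) (l : List (ℕ × ℕ × ℕ)) : Bool → ℕ → ℕ → Bool :=
  List.rec (fun _ p n => leaf (Nat.xor 2417851639229258349412350 (Nat.lor p n)))
   (fun lv _ ih nz p n =>
     and (chk M lv.2.2 (ih nz) p n)
      (and (addP p n lv.1 lv.2.1 (chk M lv.2.2 (ih true)))
        (cond nz (addP p n lv.2.1 lv.1 (chk M lv.2.2 (ih true))) true))) l

/-- The index of a point. -/
def code (x : Fin 4 → ZMod 3) : ℕ :=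
  (x 0).val + 3 * (x 1).val + 9 * (x 2).val + 27 * (x 3).val

/-- The point of given index. -/
def dec (i : ℕ) : Fin 4 → ZMod 3 := ![(i : ℕ), (i / 3 : ℕ), (i / 9 : ℕ), (i / 27 : ℕ)]

theorem code_lt : ∀ x, code x < 81 := by decide +kernel

theorem dec_code : ∀ x, dec (code x) = x := by decide +kernel

theorem code_dec : ∀ i < 81, code (dec i) = i := by decide +kernel

theorem code_inj {x y : Fin 4 → ZMod 3} (h : code x = code y) : x = y := by
  rw [← dec_code x, h, dec_code]

/-- The value of the monomial of a level. -/
def val (lv : ℕ × ℕ × ℕ) (x : Fin 4 → ZMod 3) : ZMod 3 :=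
  if lv.1.testBit (code x) then 1 else if lv.2.1.testBit (code x) then 2 else 0

/-- The form attached to a list of levels and coefficients. -/
def sm : List (ℕ × ℕ × ℕ) → (ℕ → ZMod 3) → (Fin 4 → ZMod 3) → ZMod 3
  | [], _, _ => 0
  | lv :: ls, c, x => c 0 * val lv x + sm ls (fun k => c (k + 1)) x

theorem sm_neg (ls : List (ℕ × ℕ × ℕ)) (c : ℕ → ZMod 3) (x : Fin 4 → ZMod 3) :
    sm ls (fun k => - c k) x = - sm ls c x := by
  induction ls generalizing c with
  | nil => simp [sm]
  | cons lv ls ih =>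
    have := ih (fun k => c (k + 1))
    simp only [sm, this]
    ring

theorem sm_zero (ls : List (ℕ × ℕ × ℕ)) (c : ℕ → ZMod 3) (x : Fin 4 → ZMod 3)
    (h : ∀ lv ∈ ls, val lv x = 0) : sm ls c x = 0 := by
  induction ls generalizing c with
  | nil => rfl
  | cons lv ls ih =>
    simp only [sm]
    rw [h lv (by simp), ih _ (fun l hl => h l (by simp [hl]))]
    simp

/-- Correctness of the tables. -/
def Good : List (ℕ × ℕ × ℕ) → Prop
  | [] => True
  | lv :: ls => val lv 0 = 0 ∧ (∀ x, lv.2.1.testBit (code x) = decide (val lv x = 2)) ∧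
      (∀ x, lv.2.2.testBit (code x) = true → x ≠ 0 ∧ ∀ l ∈ ls, val l x = 0) ∧
      lv.2.2 < 2 ^ 81 ∧ Good ls

theorem bit_add (p n P N : ℕ) (i : ℕ) (a b : ZMod 3)
    (hp : p.testBit i = decide (a = 1)) (hn : n.testBit i = decide (a = 2))
    (hP : P.testBit i = decide (b = 1)) (hN : N.testBit i = decide (b = 2)) :
    (Nat.xor (Nat.lor n N) (Nat.xor (Nat.lor p N) (Nat.lor n P))).testBit i =
      decide (a + b = 1) ∧
    (Nat.xor (Nat.lor p P) (Nat.xor (Nat.lor p N) (Nat.lor n P))).testBit i =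
      decide (a + b = 2) := by
  have e1 : ∀ a b, Nat.lor a b = a ||| b := fun _ _ => rfl
  have e2 : ∀ a b, Nat.xor a b = a ^^^ b := fun _ _ => rfl
  simp only [e1, e2, Nat.testBit_or, Nat.testBit_xor, hp, hn, hP, hN]
  clear hp hn hP hN
  revert a b
  decide

theorem bit_or (p n : ℕ) (i : ℕ) (a : ZMod 3)
    (hp : p.testBit i = decide (a = 1)) (hn : n.testBit i = decide (a = 2)) :
    (Nat.lor p n).testBit i = decide (a ≠ 0) := by
  have e1 : ∀ a b, Nat.lor a b = a ||| b := fun _ _ => rfl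
  rw [e1, Nat.testBit_or, hp, hn]
  clear hp hn
  revert a
  decide

theorem chk_sound {M D : ℕ} {k : ℕ → ℕ → Bool} {p n : ℕ} (hD : D < 2 ^ 81)
    (F : (Fin 4 → ZMod 3) → ZMod 3)
    (hp : ∀ x, p.testBit (code x) = decide (F x = 1))
    (hn : ∀ x, n.testBit (code x) = decide (F x = 2))
    (hF : ∀ x, M.testBit (code x) = true → D.testBit (code x) = true → F x ≠ 0)
    (h : chk M D k p n = true) : k p n = true := by
  have hb : Nat.beq (Nat.land (Nat.land M D) (Nat.lor p n)) (Nat.land M D) = true := by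
    rw [Nat.beq_eq]
    apply Nat.eq_of_testBit_eq
    intro i
    have e1 : ∀ a b, Nat.land a b = a &&& b := fun _ _ => rfl
    simp only [e1, Nat.testBit_and]
    by_cases hi : i < 81
    · have hc := code_dec i hi
      cases h1 : M.testBit i with
      | false => simp
      | true =>
        cases h2 : D.testBit i with
        | false => simp
        | true =>
          rw [← hc] at h1 h2 ⊢
          rw [bit_or p n _ _ (hp _) (hn _)]
          simpa using hF _ h1 h2
    · have : D.testBit i = false := Nat.testBit_lt_two_pow
        (hD.trans_le (Nat.pow_le_pow_right (by norm_num) (by omega)))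
      simp [this]
  rw [chk, force_eq, hb] at h
  exact h

theorem go_sound (M : ℕ) (leaf : ℕ → Bool) (ls : List (ℕ × ℕ × ℕ)) (hg : Good ls) :
    ∀ (nz : Bool) (p n : ℕ) (F : (Fin 4 → ZMod 3) → ZMod 3) (c : ℕ → ZMod 3),
    go M leaf ls nz p n = true →
    (∀ x, p.testBit (code x) = decide (F x = 1)) →
    (∀ x, n.testBit (code x) = decide (F x = 2)) →
    (nz = false → ∀ x, F x = 0) → F 0 = 0 →
    (∀ x, M.testBit (code x) = true → x ≠ 0 → F x + sm ls c x ≠ 0) →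
    ∃ z, leaf z = true ∧
      ∀ x, z.testBit (code x) = decide (x ≠ 0 ∧ F x + sm ls c x = 0) := by
  induction ls with
  | nil =>
    intro nz p n F c h hp hn _ h0 _
    refine ⟨_, h, fun x => ?_⟩
    have e2 : ∀ a b, Nat.xor a b = a ^^^ b := fun _ _ => rfl
    have e3 : ∀ x, Nat.testBit 2417851639229258349412350 (code x) = decide (x ≠ 0) := by
      decide +kernel
    rw [e2, Nat.testBit_xor, bit_or p n _ _ (hp x) (hn x), e3]
    simp only [sm, add_zero]
    by_cases h1 : x = 0
    · subst h1
      simp [h0]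
    · by_cases h2 : F x = 0 <;> simp [h1, h2]
  | cons lv ls ih =>
    intro nz p n F c h hp hn hz h0 hM
    obtain ⟨hv0, hN, hD, hlt, hg'⟩ := hg
    have h21 : (2 : ZMod 3) ≠ 1 := by decide
    have h01 : (0 : ZMod 3) ≠ 1 := by decide
    have hP : ∀ x, lv.1.testBit (code x) = decide (val lv x = 1) := by
      intro x
      unfold val
      split_ifs with h1 h2 <;> simp [h1, h21]
    have step : ∀ (nz' : Bool) (p' n' : ℕ) (F' : (Fin 4 → ZMod 3) → ZMod 3) (c' : ℕ → ZMod 3),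
        chk M lv.2.2 (go M leaf ls nz') p' n' = true →
        (∀ x, p'.testBit (code x) = decide (F' x = 1)) →
        (∀ x, n'.testBit (code x) = decide (F' x = 2)) →
        (nz' = false → ∀ x, F' x = 0) → F' 0 = 0 →
        (∀ x, F' x + sm ls c' x = 0 ↔ F x + sm (lv :: ls) c x = 0) →
        ∃ z, leaf z = true ∧
          ∀ x, z.testBit (code x) = decide (x ≠ 0 ∧ F x + sm (lv :: ls) c x = 0) := by
      intro nz' p' n' F' c' h' hp' hn' hz' h0' hM'
      have hgo := chk_sound hlt F' hp' hn' (fun x hx hx' hF0 => by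
        obtain ⟨k1, k2⟩ := hD x hx'
        apply hM x hx k1
        rw [← hM', sm_zero ls c' x k2, hF0, add_zero]) h'
      obtain ⟨z, hl, hzz⟩ := ih hg' nz' p' n' F' c' hgo hp' hn' hz' h0'
        (fun x hx hx0 => by rw [Ne, hM']; exact hM x hx hx0)
      exact ⟨z, hl, fun x => by rw [hzz]; simp only [hM']⟩
    have h' : and (chk M lv.2.2 (go M leaf ls nz) p n)
      (and (addP p n lv.1 lv.2.1 (chk M lv.2.2 (go M leaf ls true)))
        (cond nz (addP p n lv.2.1 lv.1 (chk M lv.2.2 (go M leaf ls true))) true)) = true := h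
    rw [Bool.and_eq_true, Bool.and_eq_true] at h'
    obtain ⟨g0, g1, g2⟩ := h'
    simp only [addP, force_eq] at g1 g2
    have b1 := fun x => bit_add p n lv.1 lv.2.1 (code x) (F x) (val lv x) (hp x) (hn x) (hP x) (hN x)
    rcases zmod3_cases (c 0) with hc | hc | hc
    · refine step nz p n F (fun k => c (k + 1)) g0 hp hn hz h0 (fun x => ?_)
      rw [sm, hc, zero_mul, zero_add]
    · refine step true _ _ (fun x => F x + val lv x) (fun k => c (k + 1)) g1
        (fun x => (b1 x).1) (fun x => (b1 x).2) (by simp) (by simp [h0, hv0]) (fun x => ?_)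
      rw [sm, hc, one_mul, add_assoc]
    · cases nz with
      | false =>
        refine step true _ _ (fun x => F x + val lv x) (fun k => - c (k + 1)) g1
          (fun x => (b1 x).1) (fun x => (b1 x).2) (by simp) (by simp [h0, hv0]) (fun x => ?_)
        rw [sm_neg ls (fun k => c (k + 1)), sm, hc, hz rfl x]
        generalize val lv x = v
        generalize sm ls (fun k => c (k + 1)) x = w
        revert v w
        decide
      | true =>
        have d1 : ∀ a : ZMod 3, decide (2 * a = 1) = decide (a = 2) := by decide
        have d2 : ∀ a : ZMod 3, decide (2 * a = 2) = decide (a = 1) := by decide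
        have b2 := fun x => bit_add p n lv.2.1 lv.1 (code x) (F x) (2 * val lv x) (hp x) (hn x)
          (by rw [d1]; exact hN x) (by rw [d2]; exact hP x)
        refine step true _ _ (fun x => F x + 2 * val lv x) (fun k => c (k + 1)) g2
          (fun x => (b2 x).1) (fun x => (b2 x).2) (by simp) (by simp [h0, hv0]) (fun x => ?_)
        rw [sm, hc, add_assoc]

/-- Population count. -/
def pc (f : ℕ) : ℕ → ℕ → ℕ :=
  Nat.rec (fun _ acc => acc) (fun _ ih m acc =>
    force (Nat.add acc (Nat.mod m 2)) fun acc' => force (Nat.div m 2) fun m' => ih m' acc') f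

theorem pc_eq (f m acc : ℕ) : pc f m acc = acc + ∑ i ∈ range f, (m.testBit i).toNat := by
  induction f generalizing m acc with
  | zero => simp [pc]
  | succ f ih =>
    have h : pc (f + 1) m acc =
      force (Nat.add acc (Nat.mod m 2)) fun acc' => force (Nat.div m 2) fun m' => pc f m' acc' :=
      rfl
    rw [h, force_eq, force_eq, ih, Finset.sum_range_succ']
    have e1 : Nat.add acc (Nat.mod m 2) = acc + m % 2 := rfl
    have e2 : Nat.div m 2 = m / 2 := rfl
    have e3 : (m.testBit 0).toNat = m % 2 := by
      rw [Nat.testBit_zero]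
      rcases Nat.mod_two_eq_zero_or_one m with h | h <;> simp [h]
    simp only [e1, e2, e3, Nat.testBit_succ]
    omega

/-- The set of points with a given bit mask. -/
def decode (m : ℕ) : Finset (Fin 4 → ZMod 3) := univ.filter fun x => m.testBit (code x) = true

theorem mem_decode {m : ℕ} {x : Fin 4 → ZMod 3} :
    x ∈ decode m ↔ m.testBit (code x) = true := by simp [decode]

theorem card_decode (m : ℕ) : (decode m).card = pc 81 m 0 := by
  rw [pc_eq, zero_add, decode, Finset.card_filter]
  refine Finset.sum_nbij' code dec ?_ ?_ ?_ ?_ ?_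
  · intro x _; exact mem_range.2 (code_lt x)
  · intro x _; exact mem_univ _
  · intro x _; exact dec_code x
  · intro i hi; exact code_dec i (mem_range.1 hi)
  · intro x _
    cases m.testBit (code x) <;> simp

theorem decode_inj {m m' : ℕ} (h : m < 2 ^ 81) (h' : m' < 2 ^ 81) (he : decode m = decode m') :
    m = m' := by
  apply Nat.eq_of_testBit_eq
  intro i
  by_cases hi : i < 81
  · rw [← code_dec i hi, Bool.eq_iff_iff, ← mem_decode, ← mem_decode, he]
  · rw [Nat.testBit_lt_two_pow (h.trans_le (Nat.pow_le_pow_right (by norm_num) (by omega))),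
      Nat.testBit_lt_two_pow (h'.trans_le (Nat.pow_le_pow_right (by norm_num) (by omega)))]

end CapAux

namespace CapAux

open Finset

/-! ### The data -/

/-- For each monomial: the points where it is 1, the points where it is 2, and the nonzero points
where all later monomials vanish. -/
def levels : List (ℕ × ℕ × ℕ) := [
  (2072444262196507156639158, 0, 6),
  (1286997350039840060743952, 757057264729317682790560, 6),
  (2384730383897350700790264, 0, 510),
  (2417842433871551418859008, 0, 263166),
  (1380277635599186969830400, 692158736290714246334464, 1839102),
  (2116136708926112027144192, 268584595714322248990720, 134217726),
  (2417851639229258215194624, 0, 18014398777917438),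
  (1381629502984033730035712, 690814759212473311559680, 126100790640115710),
  (2119760327422824887091200, 264970056474525681319936, 9205357707064770558),
  (2413129272781504356810752, 4713161090046927831040, 2417851639229258349412350)]

/-- The indices of the points of `S20`. -/
def S0c : List ℕ := [1, 2, 3, 6, 14, 16, 23, 25, 32, 34, 40, 44, 49, 53, 59, 61, 67, 71, 76, 80]

/-- The masks of the caps disjoint from `S20`. -/
def caps : List ℕ := [
  101927894531894686992, 106179292539536970000, 107368242850003815696,
  350943212112246485664, 406177468996513071776, 411617817314762958496,
  636809374373532184848, 637998324683999030544, 642249722691641313552,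
  963939486720844499616, 1241715811869585212064, 1789786083268024470176,
  1794037481275807511200, 1845020340152431814304, 6253470096060758274048,
  6259649034795457184256, 6290834140043893932032, 6294959437261172913664,
  6825589519095027370496, 6831155968203781316608, 6862214972661714004992,
  6867204961085946069504, 9468025724035647320064, 9487823477663834875392,
  9519008582912271623168, 9869159161411914478592, 10040145147069916416512,
  10441404685236687634432, 11276943028109759774720, 11308002032567692463104,
  14499577761854856135600, 14536203215421542770096, 15366301209976365023664,
  15942672031018417161136, 18914109769560672311808, 18927854685244665016320,
  18969344026445079655936, 19315369307727443529728, 19485616702968996444160,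
  19886750140345263602688, 20716848134900085856256, 20758463576891004555264,
  23945049317753936163248, 23981098310636100916144, 24816636653509173056432,
  25383892188909714147760, 28390836377659914621360, 28998392303950403506608,
  28999581254260870352304, 37797865140969871652864, 37821914292605701491200,
  37858539746172388125696, 38203249976353781094400, 38374235962011923790336,
  38780935848496804136960, 39606782445043984107520, 39642092847509699836928,
  42839108925114972638128, 42870294030363409385904, 43700392024918372397488,
  44272511447952641493936, 51946499690712481302800, 51950751088720264343824,
  51951940039030731189520, 151517185262740991770624, 151530804077634480415744,
  152047815344574986985472, 152402391413389717308928, 152919402680330223878656,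
  152933021495223712523776, 170033296029880378725296, 170052481293882480558512,
  170093970635082895198128, 170604802963288702857648, 175070414516808352530704,
  175105724919274068260112, 175935822913828890513680, 176513508785971913556240,
  179450376718260755661472, 180409398274151858307232, 181294604424800583845536,
  188922491749607687195056, 188941100552925407904688, 188977726006492094539184,
  189498862570649739332528, 193958295185434690095376, 193999910627425608794384,
  194825757223972788764944, 195397138056590608837904, 203361757058921719144448,
  204246963209570444682752, 204592988490852808556544, 207784467533202763035296,
  207789907881520872164000, 208191167419687643381920, 209573460982858183875232,
  212801662165712045225984, 213693173355885973733888, 214074509039634053337088,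
  214610579469786157680640, 217247449225618023684096, 217267373080036715298816,
  217302683482502431028224, 217825135097761046726656, 302255017878240391083520,
  302274203142242492916736, 302310252135124657669632, 302661717764725271430144,
  302822273413640932174848, 303227658249024841616384, 304057756243579804627968,
  304095120287562940285952, 307285957426433514176944, 307327446767633928816560,
  308153293364181108787120, 308724800297589432919472, 325843683635563830874384,
  325844872585874297720080, 325849123983882080761104, 340065835301281500008880,
  340067024251591966854576, 340674580177882455739824, 477254689605765285675008,
  478139895756414011213312, 479098917312305113859072, 491130815990200590935712,
  491476841271482954809504, 492362047422131680347808, 510034567480613271506944,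
  510053626643824869280768, 510095242085815787979776, 510605948313231091579904,
  604864133424440264235520, 604884057278858955850240, 605394763506274259450368,
  605750780726980464738304, 606261486954395768338432, 606281410808814459953152,
  613935475197155597103536, 613959524348791426941872, 613990709454039863689648,
  614507594620189866199984, 618971278632982600003856, 619008642676965735661840,
  619844181019838807802128, 620410121504138377988368, 632802891329068782072480,
  633756346435851130772128, 634642993738391331274912, 656708705220620991609344,
  657595352523161192112128, 658548807629943540811776, 783922077589388499529728,
  783928256528123198439936, 784309592211871278043136, 785730994893462611984384,
  802812011899532397780992, 802816137196749536004608, 803217396734916307222528,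
  804601005349187818620928, 906726718749367983150000, 906741652615362442700208,
  906777701608244607453104, 907293974284768524241328, 911763837236295956955408,
  911794896240753889643792, 912624994235308852655376, 913197239759133625811216,
  916139548039740717803168, 916143799437748360086176, 916544932875124627244704,
  917928667590186642702496, 921161732660674232058368, 922042074923689229591552,
  922429589546172008104960, 922964471026013645602816, 930601637767464558139904,
  931488285070004758642688, 931838435648504401498112, 935052991276479290544128,
  935066610091372779189248, 935103974135355914847232, 935618931760778860730368,
  944473638854682584418976, 944823789433182227274400, 945710436735722427777184,
  953936620547097985825792, 953960795799524319723520, 953991854803982252411904,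
  954508866070922758981632, 1076709069743593243293184, 1076714636192701856481280,
  1077115769630078123639808, 1078498189294039168192512, 1095598265463320551762944,
  1095603255451744783827456, 1096520661565644967774208, 1096871112337242559874048]

/-- The mask of `S20` translated by the negative of the point of index `a`. -/
def msk (a : ℕ) : ℕ := S0c.foldr (fun s m => Nat.lor m (2 ^ (code (dec s - dec a)))) 0

set_option maxRecDepth 100000

theorem good_levels : Good levels := by
  simp only [levels, Good]
  repeat' apply And.intro
  all_goals first | exact True.intro | decide +kernel

theorem sm_levels (c : ℕ → ZMod 3) (x : Fin 4 → ZMod 3) : sm levels c x = quad c x := by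
  have h : ∀ x, levels.map (fun lv => val lv x) = [x 0 * x 0, x 0 * x 1, x 1 * x 1, x 2 * x 2,
    x 0 * x 2, x 1 * x 2, x 3 * x 3, x 0 * x 3, x 1 * x 3, x 2 * x 3] := by decide +kernel
  have h' := h x
  simp only [levels, List.map_cons, List.map_nil, List.cons.injEq, and_true] at h'
  obtain ⟨h0, h1, h2, h3, h4, h5, h6, h7, h8, h9⟩ := h'
  simp only [levels, sm, quad, h0, h1, h2, h3, h4, h5, h6, h7, h8, h9]

theorem search_ne : (List.range 80).all (fun a => force (msk (a + 1)) fun m =>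
    go m (fun z => not (Nat.beq (pc 81 z 0) 20)) levels false 0 0) = true := by
  decide +kernel

theorem search_zero : (force (msk 0) fun m =>
    go m (fun z => cond (Nat.beq (pc 81 z 0) 20) (caps.any (Nat.beq z)) true)
      levels false 0 0) = true := by
  decide +kernel

theorem caps_lines : (List.range 81).all (fun j => (List.range j).all fun i =>
    force (code (-dec i - dec j)) fun k => cond (Nat.ble k j) true
      (force (Nat.lor (Nat.lor (2 ^ i) (2 ^ j)) (2 ^ k)) fun l =>
        caps.all (fun m => not (Nat.beq (Nat.land m l) l)))) = true := by
  decide +kernel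

theorem caps_check : caps.all (fun m => Nat.beq (pc 81 m 0) 20 &&
    Nat.beq (Nat.land m (msk 0)) 0 && Nat.blt m (2 ^ 81)) = true := by
  decide +kernel

theorem caps_nodup : caps.Nodup := by decide +kernel

theorem caps_length : caps.length = 198 := by decide +kernel

/-! ### Conclusion -/

theorem mem_S0c : ∀ i ∈ S0c, dec i ∈ S20 := by decide +kernel

theorem msk_zero : ∀ x ∈ S20, (msk 0).testBit (code x) = true := by decide +kernel

theorem msk_sound (a : ℕ) (x : Fin 4 → ZMod 3) (h : (msk a).testBit (code x) = true) :
    x + dec a ∈ S20 := by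
  have key : ∀ l : List ℕ, (∀ i ∈ l, dec i ∈ S20) →
      (l.foldr (fun s m => Nat.lor m (2 ^ (code (dec s - dec a)))) 0).testBit (code x) = true →
      x + dec a ∈ S20 := by
    intro l
    induction l with
    | nil => simp
    | cons s l ih =>
      intro hl h
      have e1 : ∀ a b, Nat.lor a b = a ||| b := fun _ _ => rfl
      rw [List.foldr_cons, e1, Nat.testBit_or, Bool.or_eq_true, Nat.testBit_two_pow] at h
      rcases h with h | h
      · exact ih (fun i hi => hl i (by simp [hi])) h
      · have := code_inj (of_decide_eq_true h)
        rw [← this, sub_add_cancel]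
        exact hl s (by simp)
  exact key _ mem_S0c h

theorem search_use (T : Finset (Fin 4 → ZMod 3)) (hd : Disjoint S20 T) (a : ℕ)
    (c : ℕ → ZMod 3) (hT : ∀ x, x + dec a ∈ T ↔ x ≠ 0 ∧ quad c x = 0) (leaf : ℕ → Bool)
    (h : go (msk a) leaf levels false 0 0 = true) :
    ∃ z, leaf z = true ∧ ∀ x, x ∈ decode z ↔ x + dec a ∈ T := by
  obtain ⟨z, hz, hzz⟩ := go_sound (msk a) leaf levels good_levels false 0 0 (fun _ => 0) c h
    (by simp) (by simp; decide) (by simp) rfl (by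
      intro x hx hx0 hs
      rw [sm_levels, zero_add] at hs
      exact Finset.disjoint_left.1 hd (msk_sound a x hx) ((hT x).2 ⟨hx0, hs⟩))
  refine ⟨z, hz, fun x => ?_⟩
  rw [mem_decode, hzz, hT, sm_levels, zero_add, decide_eq_true_iff]

theorem card_shift (T U : Finset (Fin 4 → ZMod 3)) (a : Fin 4 → ZMod 3)
    (h : ∀ x, x ∈ U ↔ x + a ∈ T) : U.card = T.card := by
  refine Finset.card_bij (fun x _ => x + a) (fun x hx => (h x).1 hx)
    (fun x _ y _ hxy => add_right_cancel hxy) (fun y hy => ⟨y - a, ?_, sub_add_cancel _ _⟩)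
  rw [h, sub_add_cancel]; exact hy

theorem mem_caps_of (T : Finset (Fin 4 → ZMod 3)) (hT : MaximalCap T) (hd : Disjoint S20 T) :
    ∃ m ∈ caps, decode m = T := by
  obtain ⟨a, c, h⟩ := shape T hT
  have h20 := ((maximalCap_iff T).1 hT).2
  rw [← dec_code a] at h
  have hlt := code_lt a
  generalize code a = k at h hlt
  rcases Nat.eq_zero_or_pos k with rfl | hk
  · have hs := search_zero
    rw [force_eq] at hs
    obtain ⟨z, hz, hzz⟩ := search_use T hd 0 c h _ hs
    have hc := card_shift T _ _ hzz
    rw [card_decode, h20] at hc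
    rw [hc] at hz
    have hz' : caps.any (Nat.beq z) = true := hz
    rw [List.any_eq_true] at hz'
    obtain ⟨m, hm, hzm⟩ := hz'
    rw [Nat.beq_eq] at hzm
    refine ⟨m, hm, ?_⟩
    rw [← hzm]
    ext x
    rw [hzz, show dec 0 = 0 by decide, add_zero]
  · exfalso
    have hs := List.all_eq_true.1 search_ne (k - 1) (List.mem_range.2 (by omega))
    rw [force_eq, Nat.sub_add_cancel hk] at hs
    obtain ⟨z, hz, hzz⟩ := search_use T hd k c h _ hs
    have hc := card_shift T _ _ hzz
    rw [card_decode, h20] at hc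
    rw [hc] at hz
    exact absurd hz (by decide)

theorem caps_isCap (m : ℕ) (hm : m ∈ caps) : IsCap (decode m) := by
  have key : ∀ x ∈ decode m, ∀ y ∈ decode m, ∀ z ∈ decode m, code x < code y →
      code y < code z → x + y + z ≠ 0 := by
    intro x hx y hy z hz hxy hyz h
    rw [mem_decode] at hx hy hz
    have h1 := List.all_eq_true.1 caps_lines (code y) (List.mem_range.2 (code_lt y))
    have h2 := List.all_eq_true.1 h1 (code x) (List.mem_range.2 hxy)
    rw [dec_code, dec_code, show -x - y = z by rw [← sub_eq_zero, ← neg_eq_zero, ← h]; abel,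
      force_eq, show Nat.ble (code z) (code y) = false by
        rw [Bool.eq_false_iff, Ne, Nat.ble_eq]; omega, cond_false, force_eq] at h2
    have h3 := List.all_eq_true.1 h2 m hm
    have e1 : ∀ a b, Nat.land a b = a &&& b := fun _ _ => rfl
    have e2 : ∀ a b, Nat.lor a b = a ||| b := fun _ _ => rfl
    rw [Bool.not_eq_true', Bool.eq_false_iff, Ne, Nat.beq_eq] at h3
    apply h3
    apply Nat.eq_of_testBit_eq
    intro i
    simp only [e1, e2, Nat.testBit_and, Nat.testBit_or, Nat.testBit_two_pow]
    by_cases i1 : code x = i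
    · subst i1; simp [hx]
    by_cases i2 : code y = i
    · subst i2; simp [hy]
    by_cases i3 : code z = i
    · subst i3; simp [hz]
    simp [i1, i2, i3]
  intro x hx y hy z hz hxy hxz hyz h
  have n1 : code x ≠ code y := fun h => hxy (code_inj h)
  have n2 : code x ≠ code z := fun h => hxz (code_inj h)
  have n3 : code y ≠ code z := fun h => hyz (code_inj h)
  rcases Nat.lt_or_gt_of_ne n1 with c1 | c1 <;> rcases Nat.lt_or_gt_of_ne n2 with c2 | c2 <;>
    rcases Nat.lt_or_gt_of_ne n3 with c3 | c3
  · exact key x hx y hy z hz c1 c3 h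
  · exact key x hx z hz y hy c2 c3 (by rw [← h]; abel)
  · omega
  · exact key z hz x hx y hy c2 c1 (by rw [← h]; abel)
  · exact key y hy x hx z hz c1 c2 (by rw [← h]; abel)
  · omega
  · exact key y hy z hz x hx c3 c2 (by rw [← h]; abel)
  · exact key z hz y hy x hx c3 c1 (by rw [← h]; abel)

theorem caps_facts (m : ℕ) (hm : m ∈ caps) :
    MaximalCap (decode m) ∧ Disjoint S20 (decode m) ∧ m < 2 ^ 81 := by
  have h := List.all_eq_true.1 caps_check m hm
  rw [Bool.and_eq_true, Bool.and_eq_true, Nat.beq_eq, Nat.beq_eq] at h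
  obtain ⟨⟨h1, h2⟩, h3⟩ := h
  refine ⟨(maximalCap_iff _).2 ⟨caps_isCap m hm, by rw [card_decode, h1]⟩, ?_, ?_⟩
  · rw [Finset.disjoint_left]
    intro x hx hx'
    have h4 := msk_zero x hx
    rw [mem_decode] at hx'
    have h5 := congrArg (fun n => Nat.testBit n (code x)) h2
    have e1 : ∀ a b, Nat.land a b = a &&& b := fun _ _ => rfl
    simp [e1, Nat.testBit_and, h4, hx'] at h5
  · exact Nat.le_of_ble_eq_true h3

theorem count_S20 :
    Nat.card {T : Finset (Fin 4 → ZMod 3) // MaximalCap T ∧ Disjoint S20 T} = 198 := by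
  rw [Nat.subtype_card (caps.toFinset.image decode)]
  · rw [Finset.card_image_of_injOn, List.toFinset_card_of_nodup caps_nodup, caps_length]
    intro m hm m' hm' h
    have hm1 : m ∈ caps := by simpa using hm
    have hm2 : m' ∈ caps := by simpa using hm'
    exact decode_inj (caps_facts m hm1).2.2 (caps_facts m' hm2).2.2 h
  · intro T
    rw [Finset.mem_image]
    constructor
    · rintro ⟨m, hm, rfl⟩
      have := caps_facts m (List.mem_toFinset.1 hm)
      exact ⟨this.1, this.2.1⟩
    · rintro ⟨h1, h2⟩
      obtain ⟨m, hm, h⟩ := mem_caps_of T h1 h2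
      exact ⟨m, List.mem_toFinset.2 hm, h⟩

end CapAux

/-- Every maximal cap in `AG(4,3)` is disjoint from exactly 198 maximal caps. -/
theorem card_maximal_caps_AG43_disjoint_from
    (S : Finset (Fin 4 → ZMod 3)) (hS : MaximalCap S) :
    Nat.card {T : Finset (Fin 4 → ZMod 3) // MaximalCap T ∧ Disjoint S T} = 198 := by
  rw [CapAux.reduce S hS, CapAux.count_S20]
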